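/- arXiv:1610.08861 — 18 statements merged into one kernel-verified Lean document; each statement's English description precedes it below -/
import Mathlib

section
/- Let k : ℝ → ℝ be a continuous, even function taking values in [0,1] with k(0) = 1, lim_{r→∞} k(r) = 0, and k convex on [0,∞). Then there exists a probability measure μ on ℝ with μ((−∞,0]) = 0 such that k(r) = ∫₀^∞ max{0, 1 − |r|/x} dμ(x) for every r ∈ ℝ. -/
open MeasureTheory Filter

/-- Layer-cake part. -/
theorem polya_aux_repr (k d : ℝ → ℝ) (hcont : Continuous k)
    (hrange : ∀ r : ℝ, k r ∈ Set.Icc (0 : ℝ) 1)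
    (hd : ∀ x, 0 < x → HasDerivWithinAt k (d x) (Set.Ioi x) x)
    (μ : Measure ℝ) [IsProbabilityMeasure μ]
    (hμ : ∀ x, 0 < x → μ.real (Set.Ioi x) = k x - x * d x) (r : ℝ) (hr : 0 < r) :
    k r = ∫ x in Set.Ioi (0 : ℝ), max 0 (1 - r / x) ∂μ := by
  set ν := μ.restrict (Set.Ioi (0 : ℝ)) with hν
  have hae : ∀ᵐ x ∂ν, 0 < x := ae_restrict_mem measurableSet_Ioi
  have hint : Integrable (fun x : ℝ => max 0 (1 - r / x)) ν := by
    refine Integrable.of_bound (C := 1) ?_ ?_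
    · exact (by fun_prop : Measurable (fun x : ℝ => max 0 (1 - r / x))).aestronglyMeasurable
    · filter_upwards [hae] with x hx
      rw [Real.norm_of_nonneg (le_max_left _ _)]
      have : 0 < r / x := by positivity
      exact max_le (by norm_num) (by linarith)
  rw [hint.integral_eq_integral_meas_lt (Eventually.of_forall fun x => le_max_left _ _)]
  set g : ℝ → ℝ := fun t => ν.real {a : ℝ | t < max 0 (1 - r / a)} with hg
  have hanti : Antitone g := by
    intro s t hst
    exact measureReal_mono (fun a ha => lt_of_le_of_lt hst ha)
  have hg1 : ∀ t ∈ Set.Ioi (0:ℝ), t ∉ Set.Ioc (0:ℝ) 1 → g t = 0 := by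
    intro t ht ht'
    have ht1 : 1 < t := by
      by_contra h
      exact ht' ⟨ht, not_lt.mp h⟩
    have : ∀ᵐ a ∂ν, ¬ (t < max 0 (1 - r / a)) := by
      filter_upwards [hae] with x hx
      have : 0 < r / x := by positivity
      rw [not_lt]
      exact max_le (by linarith) (by linarith)
    have h2 : ν {a : ℝ | t < max 0 (1 - r / a)} = 0 := by
      rw [ae_iff] at this
      simpa only [not_not] using this
    simp only [hg, Measure.real]
    rw [h2, ENNReal.toReal_zero]
  have e1 : ∫ t in Set.Ioi 0, g t = ∫ t in (0:ℝ)..1, g t := by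
    rw [intervalIntegral.integral_of_le zero_le_one]
    apply setIntegral_eq_of_subset_of_forall_sdiff_eq_zero measurableSet_Ioi
    · exact fun x hx => hx.1
    · exact fun x hx => hg1 x hx.1 hx.2
  have hgv : ∀ t ∈ Set.Ioo (0:ℝ) 1, g t = k (r / (1 - t)) - (r / (1 - t)) * d (r / (1 - t)) := by
    intro t ht
    have h1 : 0 < 1 - t := by linarith [ht.2]
    rw [← hμ _ (by positivity), hg]
    simp only
    rw [hν, measureReal_restrict_apply' measurableSet_Ioi]
    congr 1
    ext a
    simp only [Set.mem_inter_iff, Set.mem_ofPred_eq, Set.mem_Ioi, lt_max_iff]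
    constructor
    · rintro ⟨h | h, ha⟩
      · linarith [ht.1]
      · rw [div_lt_iff₀ h1]
        have : r / a < 1 - t := by linarith
        rw [div_lt_iff₀ ha] at this
        linarith
    · intro h
      have ha : 0 < a := lt_trans (by positivity) h
      refine ⟨Or.inr ?_, ha⟩
      rw [div_lt_iff₀ h1] at h
      have : r / a < 1 - t := by rw [div_lt_iff₀ ha]; linarith
      linarith
  rw [e1]
  have hH := intervalIntegral.integral_eq_sub_of_hasDeriv_right_of_le
    (f := fun t => -((1 - t) * k (r / (1 - t)))) (f' := g) (zero_le_one (α := ℝ)) ?_ ?_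
    hanti.intervalIntegrable
  · rw [hH]; simp
  · intro t ht
    rcases ht.2.lt_or_eq with h | h
    · have : 1 - t ≠ 0 := by linarith
      apply ContinuousAt.continuousWithinAt
      have h2 : ContinuousAt (fun t : ℝ => r / (1 - t)) t := by
        apply ContinuousAt.div continuousAt_const (by fun_prop) this
      have h3 : ContinuousAt (fun t : ℝ => k (r / (1 - t))) t :=
        ContinuousAt.comp (g := k) hcont.continuousAt h2
      have h4 : ContinuousAt (fun t : ℝ => 1 - t) t := by fun_prop
      exact (h4.mul h3).neg
    · subst h
      apply ContinuousAt.continuousWithinAt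
      unfold ContinuousAt
      simp only [sub_self, zero_mul, neg_zero]
      apply squeeze_zero_norm (a := fun t : ℝ => |1 - t|)
      · intro s
        rw [norm_neg, norm_mul, Real.norm_eq_abs, Real.norm_of_nonneg (hrange _).1]
        exact mul_le_of_le_one_right (abs_nonneg _) (hrange _).2
      · have : Continuous (fun t : ℝ => |1 - t|) := by fun_prop
        simpa using this.tendsto 1
  · intro t ht
    have h1 : 0 < 1 - t := by linarith [ht.2]
    rw [hgv t ht]
    have h1d : HasDerivAt (fun s : ℝ => 1 - s) (-1) t := by
      simpa using (hasDerivAt_id' t).const_sub 1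
    have hu : HasDerivAt (fun s : ℝ => r / (1 - s)) (r / (1 - t) ^ 2) t := by
      have := (hasDerivAt_const t r).fun_div h1d h1.ne'
      have e : (0 * (1 - t) - r * (-1)) / (1 - t) ^ 2 = r / (1 - t) ^ 2 := by ring
      rw [e] at this
      exact this
    have hc : HasDerivWithinAt (fun s : ℝ => k (r / (1 - s)))
        (d (r / (1 - t)) * (r / (1 - t) ^ 2)) (Set.Ioo t 1) t := by
      refine HasDerivWithinAt.comp (h₂ := k) t (hd _ (by positivity)) hu.hasDerivWithinAt ?_
      intro s hs
      have : 0 < 1 - s := by linarith [hs.2]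
      exact div_lt_div_of_pos_left hr this (by linarith [hs.1])
    have hc' := hc.mono_of_mem_nhdsWithin (Ioo_mem_nhdsGT ht.2)
    have := ((h1d.hasDerivWithinAt (s := Set.Ioi t)).fun_mul hc').fun_neg
    convert this using 1
    field_simp
    ring

theorem polya_criterion (k : ℝ → ℝ)
    (hcont : Continuous k)
    (heven : ∀ r : ℝ, k (-r) = k r)
    (hrange : ∀ r : ℝ, k r ∈ Set.Icc (0 : ℝ) 1)
    (h0 : k 0 = 1)
    (hlim : Tendsto k atTop (nhds 0))
    (hconv : ∀ r₁ r₂ t : ℝ, 0 ≤ r₁ → 0 ≤ r₂ → t ∈ Set.Icc (0 : ℝ) 1 →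
      k (t * r₁ + (1 - t) * r₂) ≤ t * k r₁ + (1 - t) * k r₂) :
    ∃ μ : Measure ℝ, IsProbabilityMeasure μ ∧ μ (Set.Iic 0) = 0 ∧
      ∀ r : ℝ, k r = ∫ x in Set.Ioi (0 : ℝ), max 0 (1 - |r| / x) ∂μ := by
  have hcv : ConvexOn ℝ (Set.Ici 0) k := by
    refine ⟨convex_Ici 0, ?_⟩
    intro x hx y hy a b ha hb hab
    obtain rfl : b = 1 - a := by linarith
    simpa using hconv x y a hx hy ⟨ha, by linarith⟩
  have hI : ∀ {x : ℝ}, 0 < x → x ∈ interior (Set.Ici (0:ℝ)) := by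
    intro x hx; rw [interior_Ici]; exact hx
  set d : ℝ → ℝ := fun x => derivWithin k (Set.Ioi x) x with hddef
  have hd : ∀ x, 0 < x → HasDerivWithinAt k (d x) (Set.Ioi x) x := fun x hx =>
    hcv.hasDerivWithinAt_rightDeriv_of_mem_interior (hI hx)
  have hs : ∀ x y, 0 < x → x < y → d x * (y - x) ≤ k y - k x := by
    intro x y hx hxy
    have := hcv.rightDeriv_le_slope_of_mem_interior (hI hx) (hx.trans hxy).le hxy
    rw [slope_def_field, le_div_iff₀ (by linarith)] at this
    exact this
  have hl : ∀ x y, 0 ≤ x → x < y → k y - k x ≤ d y * (y - x) := by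
    intro x y hx hxy
    have := (hcv.slope_le_leftDeriv_of_mem_interior hx (hI (hx.trans_lt hxy)) hxy).trans
      (hcv.leftDeriv_le_rightDeriv_of_mem_interior (hI (hx.trans_lt hxy)))
    rw [slope_def_field, div_le_iff₀ (by linarith)] at this
    exact this
  have hdm : ∀ x y, 0 < x → x ≤ y → d x ≤ d y := fun x y hx hxy =>
    hcv.monotoneOn_rightDeriv (hI hx) (hI (hx.trans_le hxy)) hxy
  have hdn : ∀ x, 0 < x → d x ≤ 0 := by
    intro x hx
    by_contra! h
    have h1 := hs x (x + 2 / d x) hx (by have : 0 < 2 / d x := by positivity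
                                         linarith)
    have h2 : d x * (x + 2 / d x - x) = 2 := by field_simp; ring
    linarith [(hrange (x + 2 / d x)).2, (hrange x).1]
  have hlow : ∀ x, 0 < x → 2 * (k x - k (x / 2)) ≤ x * d x := by
    intro x hx
    have := hl (x / 2) x (by linarith) (by linarith)
    linarith
  have hxd0 : ∀ x, 0 < x → x * d x ≤ 0 := fun x hx =>
    mul_nonpos_of_nonneg_of_nonpos hx.le (hdn x hx)
  -- limits of x * d x
  have hlim0 : Tendsto (fun x => x * d x) (nhdsWithin 0 (Set.Ioi 0)) (nhds 0) := by
    have hc : Continuous fun x => 2 * (k x - k (x / 2)) := by fun_prop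
    have := (hc.tendsto 0).mono_left (nhdsWithin_le_nhds (s := Set.Ioi 0))
    simp only [zero_div, sub_self, mul_zero] at this
    refine tendsto_of_tendsto_of_tendsto_of_le_of_le' this tendsto_const_nhds ?_ ?_
    · filter_upwards [self_mem_nhdsWithin] with x hx using hlow x hx
    · filter_upwards [self_mem_nhdsWithin] with x hx using hxd0 x hx
  have hlimT : Tendsto (fun x => x * d x) atTop (nhds 0) := by
    have h2 : Tendsto (fun x : ℝ => k (x / 2)) atTop (nhds 0) :=
      hlim.comp (tendsto_id.atTop_div_const (by norm_num))
    have := (hlim.sub h2).const_mul 2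
    simp only [sub_self, mul_zero] at this
    refine tendsto_of_tendsto_of_tendsto_of_le_of_le' this tendsto_const_nhds ?_ ?_
    · filter_upwards [eventually_gt_atTop 0] with x hx using hlow x hx
    · filter_upwards [eventually_gt_atTop 0] with x hx using hxd0 x hx
  -- right continuity of d
  have hdr : ∀ x, 0 < x → Tendsto d (nhdsWithin x (Set.Ioi x)) (nhds (d x)) := by
    intro x hx
    have hsl := (hasDerivWithinAt_iff_tendsto_slope' (by simp)).1 (hd x hx)
    have hmap : Tendsto (fun y : ℝ => 2 * y - x) (nhdsWithin x (Set.Ioi x))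
        (nhdsWithin x (Set.Ioi x)) := by
      apply tendsto_nhdsWithin_of_tendsto_nhds_of_eventually_within
      · have hc : Continuous (fun y : ℝ => 2 * y - x) := by fun_prop
        have := (hc.tendsto x).mono_left (nhdsWithin_le_nhds (s := Set.Ioi x))
        convert this using 2
        ring
      · filter_upwards [self_mem_nhdsWithin] with y hy
        simp only [Set.mem_Ioi] at hy ⊢
        linarith
    have h2 := ((hsl.comp hmap).const_mul 2).sub hsl
    rw [show 2 * d x - d x = d x by ring] at h2
    refine tendsto_of_tendsto_of_tendsto_of_le_of_le' tendsto_const_nhds h2 ?_ ?_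
    · filter_upwards [self_mem_nhdsWithin] with y hy using hdm x y hx (le_of_lt hy)
    · filter_upwards [self_mem_nhdsWithin] with y hy
      simp only [Set.mem_Ioi] at hy
      have h3 := hs y (2 * y - x) (hx.trans hy) (by linarith)
      have hp : 0 < y - x := by linarith
      simp only [Function.comp, slope_def_field]
      rw [show 2 * y - x - x = 2 * (y - x) by ring,
        show 2 * ((k (2 * y - x) - k x) / (2 * (y - x))) - (k y - k x) / (y - x)
          = (k (2 * y - x) - k y) / (y - x) by field_simp; ring, le_div_iff₀ hp]
      linarith
  let F : StieltjesFunction ℝ :=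
    { toFun := fun x => if x ≤ 0 then 0 else 1 - (k x - x * d x)
      mono' := by
        intro x y hxy
        simp only
        split_ifs with h1 h2 h2
        · exact le_rfl
        · push Not at h2
          have := hl 0 y le_rfl h2
          rw [h0] at this
          linarith
        · linarith
        · push Not at h1 h2
          rcases hxy.lt_or_eq with h | rfl
          · have a1 := hl x y h1.le h
            have a2 := mul_le_mul_of_nonneg_left (hdm x y h1 hxy) h1.le
            linarith
          · exact le_rfl
      right_continuous' := by
        intro x
        rw [← continuousWithinAt_Ioi_iff_Ici]
        unfold ContinuousWithinAt
        beta_reduce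
        rcases lt_trichotomy x 0 with hx | rfl | hx
        · rw [if_pos hx.le]
          refine tendsto_const_nhds.congr' ?_
          filter_upwards [mem_nhdsWithin_of_mem_nhds (Iio_mem_nhds hx)] with y hy
          rw [if_pos (le_of_lt hy)]
        · rw [if_pos le_rfl]
          have h1 : Tendsto (fun x => 1 - (k x - x * d x)) (nhdsWithin 0 (Set.Ioi 0))
              (nhds (1 - (k 0 - 0))) :=
            (((hcont.tendsto 0).mono_left nhdsWithin_le_nhds).sub hlim0).const_sub 1
          rw [h0] at h1
          simp only [sub_zero, sub_self] at h1
          refine h1.congr' ?_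
          filter_upwards [self_mem_nhdsWithin] with y hy
          rw [if_neg (not_le.mpr hy)]
        · rw [if_neg (not_le.mpr hx)]
          have h1 : Tendsto (fun x => 1 - (k x - x * d x)) (nhdsWithin x (Set.Ioi x))
              (nhds (1 - (k x - x * d x))) :=
            (((hcont.tendsto x).mono_left nhdsWithin_le_nhds).sub
              ((tendsto_id.mono_left nhdsWithin_le_nhds).mul (hdr x hx))).const_sub 1
          refine h1.congr' ?_
          filter_upwards [self_mem_nhdsWithin] with y hy
          rw [if_neg (not_le.mpr (hx.trans hy))] }
  have hF : ∀ x, F x = if x ≤ 0 then 0 else 1 - (k x - x * d x) := fun x => rfl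
  have hbot : Tendsto F atBot (nhds 0) := by
    refine tendsto_const_nhds.congr' ?_
    filter_upwards [eventually_le_atBot 0] with y hy
    rw [hF, if_pos hy]
  have htop : Tendsto F atTop (nhds 1) := by
    have := (hlim.sub hlimT).const_sub 1
    simp only [sub_zero] at this
    refine this.congr' ?_
    filter_upwards [eventually_gt_atTop 0] with y hy
    rw [hF, if_neg (not_le.mpr hy)]
  have hprob : IsProbabilityMeasure F.measure := F.isProbabilityMeasure hbot htop
  refine ⟨F.measure, hprob, ?_, ?_⟩
  · rw [F.measure_Iic hbot, hF]; simp
  · have hIoi : ∀ x, 0 < x → F.measure.real (Set.Ioi x) = k x - x * d x := by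
      intro x hx
      rw [Measure.real, F.measure_Ioi htop, hF, if_neg (not_le.mpr hx), ENNReal.toReal_ofReal]
      · ring
      · linarith [(hrange x).1, hxd0 x hx]
    have hpos := polya_aux_repr k d hcont hrange hd F.measure hIoi
    intro r
    rcases eq_or_ne r 0 with rfl | hr
    · have : F.measure.real (Set.Ioi 0) = 1 := by
        rw [Measure.real, F.measure_Ioi htop, hF]; simp
      simp [h0, this]
    · rw [← hpos |r| (abs_pos.mpr hr)]
      rcases abs_choice r with h | h <;> rw [h]
      rw [heven]
end

section
/- Let μ be a probability measure on ℝ with μ((−∞,0]) = 0 and define k_μ(r) = ∫₀^∞ max{0, 1 − |r|/x} dμ(x). Then k_μ is real-valued, continuous, even, satisfies k_μ(0) = 1 and lim_{r→∞} k_μ(r) = 0, and k_μ is convex on [0,∞). -/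
open MeasureTheory Filter

/-- The 'if' direction of Polya's characterization (Corollary 2.2): for any probability
measure `μ` on `ℝ` with positive support, the Polya kernel
`k_μ(r) = ∫₀^∞ max 0 (1 - |r|/x) dμ(x)` is continuous, even, satisfies `k_μ 0 = 1`,
tends to `0` at infinity, and is convex on `[0,∞)`. -/
theorem polya_kernel_properties (μ : Measure ℝ) [IsProbabilityMeasure μ]
    (hμ : μ (Set.Iic 0) = 0)
    (k : ℝ → ℝ)
    (hk : ∀ r : ℝ, k r = ∫ x in Set.Ioi (0 : ℝ), max 0 (1 - |r| / x) ∂μ) :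
    Continuous k ∧
    (∀ r : ℝ, k (-r) = k r) ∧
    k 0 = 1 ∧
    Tendsto k atTop (nhds 0) ∧
    (∀ r₁ r₂ t : ℝ, 0 ≤ r₁ → 0 ≤ r₂ → t ∈ Set.Icc (0 : ℝ) 1 →
      k (t * r₁ + (1 - t) * r₂) ≤ t * k r₁ + (1 - t) * k r₂) := by
  have hmeas : ∀ r : ℝ, AEStronglyMeasurable (fun x : ℝ => max 0 (1 - |r| / x))
      (μ.restrict (Set.Ioi 0)) := by
    intro r
    apply Measurable.aestronglyMeasurable
    fun_prop
  have hbd : ∀ r : ℝ, ∀ᵐ x ∂(μ.restrict (Set.Ioi 0)), ‖max 0 (1 - |r| / x)‖ ≤ (1 : ℝ) := by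
    intro r
    filter_upwards [ae_restrict_mem measurableSet_Ioi] with x hx
    have hx' : (0 : ℝ) < x := hx
    rw [Real.norm_eq_abs, abs_of_nonneg (le_max_left _ _)]
    have : 0 ≤ |r| / x := by positivity
    exact max_le zero_le_one (by linarith)
  have hint : ∀ r : ℝ, Integrable (fun x : ℝ => max 0 (1 - |r| / x))
      (μ.restrict (Set.Ioi 0)) := fun r =>
    Integrable.mono' (integrable_const (1 : ℝ)) (hmeas r) (hbd r)
  have hk' : k = fun r => ∫ x in Set.Ioi (0 : ℝ), max 0 (1 - |r| / x) ∂μ := funext hk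
  refine ⟨?_, ?_, ?_, ?_, ?_⟩
  · rw [hk']
    refine continuous_of_dominated hmeas hbd (integrable_const (1 : ℝ)) ?_
    refine Eventually.of_forall fun x => ?_
    fun_prop
  · intro r
    rw [hk, hk, abs_neg]
  · rw [hk]
    have h1 : μ (Set.Ioi 0) = 1 := by
      rw [← Set.compl_Iic]
      exact (prob_compl_eq_one_iff measurableSet_Iic).2 hμ
    simp [Measure.real, h1]
  · rw [hk']
    have := tendsto_integral_filter_of_dominated_convergence
      (μ := μ.restrict (Set.Ioi 0)) (l := (atTop : Filter ℝ))
      (F := fun r x => max 0 (1 - |r| / x)) (f := fun _ => (0 : ℝ)) (fun _ => (1 : ℝ))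
      (Eventually.of_forall hmeas) (Eventually.of_forall hbd) (integrable_const (1 : ℝ)) ?_
    · simpa using this
    · filter_upwards [ae_restrict_mem measurableSet_Ioi] with x hx
      have hx' : (0 : ℝ) < x := hx
      apply tendsto_const_nhds.congr'
      filter_upwards [eventually_ge_atTop x] with r hr
      have : 1 ≤ |r| / x := by
        rw [le_div_iff₀ hx', one_mul]
        exact hr.trans (le_abs_self r)
      exact (max_eq_left (by linarith)).symm
  · intro r₁ r₂ t h1 h2 ht
    obtain ⟨ht0, ht1⟩ := ht
    have ht1' : 0 ≤ 1 - t := by linarith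
    rw [hk, hk, hk, ← integral_const_mul, ← integral_const_mul,
      ← integral_add ((hint r₁).const_mul t) ((hint r₂).const_mul (1 - t))]
    refine integral_mono (hint _) (((hint r₁).const_mul t).add ((hint r₂).const_mul (1 - t))) ?_
    intro x
    have h3 : 0 ≤ t * r₁ + (1 - t) * r₂ := by positivity
    simp only [Pi.add_apply, abs_of_nonneg h1, abs_of_nonneg h2, abs_of_nonneg h3]
    have a1 := mul_le_mul_of_nonneg_left (le_max_right 0 (1 - r₁ / x)) ht0
    have a2 := mul_le_mul_of_nonneg_left (le_max_right 0 (1 - r₂ / x)) ht1'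
    refine max_le (by positivity) ?_
    have : 1 - (t * r₁ + (1 - t) * r₂) / x = t * (1 - r₁ / x) + (1 - t) * (1 - r₂ / x) := by
      ring
    linarith
end

section
/- Let μ be a probability measure on ℝ with μ((−∞,0]) = 0 and let k_μ be its Polya kernel. Then k_μ is positive-definite: for every n ∈ ℕ and all real numbers x₁, …, xₙ, the n×n real symmetric matrix with (i,j) entry k_μ(x_i − x_j) is positive semidefinite. -/
open MeasureTheory

lemma tri_eq (a b t : ℝ) (ht : 0 < t) :
    ∫ s, (Set.Icc a (a+t)).indicator (fun _ => (1:ℝ)) s * (Set.Icc b (b+t)).indicator (fun _ => (1:ℝ)) s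
      = t * max 0 (1 - |a - b| / t) := by
  have h : (fun s => (Set.Icc a (a+t)).indicator (fun _ => (1:ℝ)) s *
      (Set.Icc b (b+t)).indicator (fun _ => (1:ℝ)) s)
      = (Set.Icc (max a b) (min (a+t) (b+t))).indicator (fun _ => (1:ℝ)) := by
    rw [← Set.Icc_inter_Icc]
    funext s
    by_cases h1 : s ∈ Set.Icc a (a+t) <;> by_cases h2 : s ∈ Set.Icc b (b+t) <;>
      simp only [Set.indicator, Set.mem_inter_iff, h1, h2] <;> simp
  rw [h, integral_indicator measurableSet_Icc]
  simp only [integral_const, smul_eq_mul, mul_one, Measure.restrict_apply_univ,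
    measureReal_def, Real.volume_Icc]
  rw [ENNReal.toReal_ofReal', mul_max_of_nonneg _ _ ht.le, mul_zero, mul_sub, mul_one,
    mul_div_cancel₀ _ ht.ne', max_comm, min_add_add_right, ← max_sub_min_eq_abs']
  congr 1
  ring

lemma tri_pos (t : ℝ) (ht : 0 < t) (n : ℕ) (x v : Fin n → ℝ) :
    0 ≤ ∑ i : Fin n, ∑ j : Fin n, v i * max 0 (1 - |x i - x j| / t) * v j := by
  let f : Fin n → ℝ → ℝ := fun i => (Set.Icc (x i) (x i + t)).indicator (fun _ => (1:ℝ))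
  have hint : ∀ i j, Integrable (fun s => f i s * f j s) := by
    intro i j
    have hf : ∀ i, Integrable (f i) := fun i =>
      (integrable_indicator_iff measurableSet_Icc).2 (integrableOn_const (by simp))
    refine (hf j).bdd_mul (c := 1) (hf i).aestronglyMeasurable (Filter.Eventually.of_forall ?_)
    intro s
    simp only [f, Set.indicator]
    split_ifs <;> simp
  have h0 : 0 ≤ ∫ s, (∑ i, v i * f i s) ^ 2 := integral_nonneg fun s => sq_nonneg _
  have h1 : ∫ s, (∑ i, v i * f i s) ^ 2
      = t * ∑ i : Fin n, ∑ j : Fin n, v i * max 0 (1 - |x i - x j| / t) * v j := by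
    have : ∀ s, (∑ i, v i * f i s) ^ 2 = ∑ i, ∑ j, (v i * v j) * (f i s * f j s) := by
      intro s
      rw [sq, Finset.sum_mul_sum]
      refine Finset.sum_congr rfl fun i _ => Finset.sum_congr rfl fun j _ => by ring
    simp_rw [this]
    rw [integral_finsetSum _ fun i _ => integrable_finsetSum _ fun j _ => (hint i j).const_mul _,
      Finset.mul_sum]
    refine Finset.sum_congr rfl fun i _ => ?_
    rw [integral_finsetSum _ fun j _ => (hint i j).const_mul _, Finset.mul_sum]
    refine Finset.sum_congr rfl fun j _ => ?_
    rw [integral_const_mul, tri_eq _ _ _ ht]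
    ring
  rw [h1] at h0
  exact nonneg_of_mul_nonneg_right h0 ht

/-- The Polya kernel of a probability measure with positive support is positive-definite:
every kernel matrix `(k_μ (x i - x j))_{i,j}` is positive semidefinite. -/
theorem polya_kernel_posdef (μ : Measure ℝ) [IsProbabilityMeasure μ]
    (hμ : μ (Set.Iic 0) = 0)
    (k : ℝ → ℝ)
    (hk : ∀ r : ℝ, k r = ∫ x in Set.Ioi (0 : ℝ), max 0 (1 - |r| / x) ∂μ)
    (n : ℕ) (x : Fin n → ℝ) (v : Fin n → ℝ) :
    0 ≤ ∑ i : Fin n, ∑ j : Fin n, v i * k (x i - x j) * v j := by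
  have hint : ∀ r : ℝ, Integrable (fun t => max 0 (1 - |r| / t)) (μ.restrict (Set.Ioi 0)) := by
    intro r
    refine Integrable.of_bound (C := 1) (by fun_prop) ?_
    filter_upwards [ae_restrict_mem measurableSet_Ioi] with t ht
    have : 0 ≤ |r| / t := div_nonneg (abs_nonneg _) (le_of_lt ht)
    rw [Real.norm_of_nonneg (le_max_left _ _)]
    exact max_le zero_le_one (by linarith)
  have hint2 : ∀ i j, Integrable (fun t => v i * max 0 (1 - |x i - x j| / t) * v j)
      (μ.restrict (Set.Ioi 0)) := fun i j => ((hint _).const_mul _).mul_const _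
  have : ∑ i : Fin n, ∑ j : Fin n, v i * k (x i - x j) * v j
      = ∫ t in Set.Ioi (0:ℝ), ∑ i, ∑ j, v i * max 0 (1 - |x i - x j| / t) * v j ∂μ := by
    rw [integral_finsetSum _ fun i _ => integrable_finsetSum _ fun j _ => hint2 i j]
    refine Finset.sum_congr rfl fun i _ => ?_
    rw [integral_finsetSum _ fun j _ => hint2 i j]
    refine Finset.sum_congr rfl fun j _ => ?_
    rw [integral_mul_const, integral_const_mul, hk]
  rw [this]
  exact setIntegral_nonneg measurableSet_Ioi fun t ht => tri_pos t ht n x v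
end

section
/- Let μ be a probability measure on ℝ with μ((−∞,0]) = 0 such that ∫₀^∞ x dμ(x) < ∞, and let k_μ be its Polya kernel. Then for every t ≠ 0, (1/2π) ∫_ℝ k_μ(r) e^{−i r t} dr = (1/2π) ∫₀^∞ x · (sin(xt/2)/(xt/2))² dμ(x); in particular, this quantity is nonnegative. -/
open MeasureTheory Real

lemma tent_zero {x r : ℝ} (hx : 0 < x) (h : r ∉ Set.Ioc (-x) x) : max 0 (1 - |r| / x) = 0 := by
  apply max_eq_left
  rw [sub_nonpos, le_div_iff₀ hx, one_mul]
  by_contra! h2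
  rw [abs_lt] at h2
  exact h ⟨h2.1, h2.2.le⟩

lemma tent_le {x r : ℝ} (hx : 0 < x) :
    max 0 (1 - |r| / x) ≤ (Set.Ioc (-x) x).indicator (fun _ => (1 : ℝ)) r := by
  by_cases h : r ∈ Set.Ioc (-x) x
  · rw [Set.indicator_of_mem h]
    have : 0 ≤ |r| / x := by positivity
    exact max_le zero_le_one (by linarith)
  · rw [Set.indicator_of_notMem h, tent_zero hx h]

lemma ind_int {x : ℝ} : Integrable ((Set.Ioc (-x) x).indicator (fun _ => (1 : ℝ))) := by
  rw [integrable_indicator_iff measurableSet_Ioc]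
  exact integrableOn_const (by simp)

lemma norm_f (x r t : ℝ) :
    ‖((max 0 (1 - |r| / x) : ℝ) : ℂ) * Complex.exp (-(Complex.I * r * t))‖
      = max 0 (1 - |r| / x) := by
  have : -(Complex.I * r * t) = ((-(r * t) : ℝ) : ℂ) * Complex.I := by push_cast; ring
  rw [norm_mul, this, Complex.norm_exp_ofReal_mul_I, mul_one, Complex.norm_real, norm_eq_abs,
    abs_of_nonneg (le_max_left _ _)]

lemma tent_fourier {x t : ℝ} (hx : 0 < x) (ht : t ≠ 0) :
    ∫ r : ℝ, ((max 0 (1 - |r| / x) : ℝ) : ℂ) * Complex.exp (-(Complex.I * r * t))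
      = ((x * (Real.sin (x * t / 2) / (x * t / 2)) ^ 2 : ℝ) : ℂ) := by
  have hxc : (x : ℂ) ≠ 0 := by exact_mod_cast hx.ne'
  have htc : (t : ℂ) ≠ 0 := by exact_mod_cast ht
  obtain ⟨c, hc⟩ : ∃ c : ℂ, c = -(Complex.I * t) := ⟨_, rfl⟩
  have hc0 : c ≠ 0 := by rw [hc]; simp [ht]
  have hcont : Continuous (fun r : ℝ =>
      ((max 0 (1 - |r| / x) : ℝ) : ℂ) * Complex.exp (-(Complex.I * r * t))) := by
    fun_prop
  have hE : ∀ r : ℝ, HasDerivAt (fun r : ℝ => Complex.exp (c * r)) (Complex.exp (c * r) * c) r := by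
    intro r
    have h1 : HasDerivAt (fun r : ℝ => c * (r : ℂ)) c r := by
      simpa using (Complex.ofRealCLM.hasDerivAt (x := r)).const_mul c
    exact h1.cexp
  have hR : ∀ r : ℝ, HasDerivAt (fun r : ℝ => (r : ℂ)) 1 r := fun r =>
    (hasDerivAt_id r).ofReal_comp
  have h1 : ∫ r in (0 : ℝ)..x,
      ((max 0 (1 - |r| / x) : ℝ) : ℂ) * Complex.exp (-(Complex.I * r * t))
      = Complex.exp (c * x) / (x * c ^ 2) - 1 / c - 1 / (x * c ^ 2) := by
    have := intervalIntegral.integral_eq_sub_of_hasDerivAt (a := 0) (b := x)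
      (f := fun r : ℝ => (1 - (r : ℂ) / x) * Complex.exp (c * r) / c
        + Complex.exp (c * r) / (x * c ^ 2))
      (f' := fun r : ℝ =>
        ((max 0 (1 - |r| / x) : ℝ) : ℂ) * Complex.exp (-(Complex.I * r * t))) ?_
        (hcont.intervalIntegrable _ _)
    · rw [this]; simp; field_simp; ring
    · intro r hr
      rw [Set.uIcc_of_le hx.le] at hr
      have hm : max 0 (1 - |r| / x) = 1 - r / x := by
        rw [abs_of_nonneg hr.1]
        apply max_eq_right
        rw [sub_nonneg, div_le_one hx]; exact hr.2
      convert ((((hR r).div_const (x : ℂ)).const_sub 1).mul (hE r)).div_const c |>.add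
        ((hE r).div_const (x * c ^ 2)) using 1
      · rfl
      rw [hm, show -(Complex.I * r * t) = c * r by rw [hc]; ring]
      push_cast
      field_simp
      ring
  have h2 : ∫ r in (-x)..0,
      ((max 0 (1 - |r| / x) : ℝ) : ℂ) * Complex.exp (-(Complex.I * r * t))
      = 1 / c - 1 / (x * c ^ 2) + Complex.exp (-(c * x)) / (x * c ^ 2) := by
    have := intervalIntegral.integral_eq_sub_of_hasDerivAt (a := -x) (b := 0)
      (f := fun r : ℝ => (1 + (r : ℂ) / x) * Complex.exp (c * r) / c
        - Complex.exp (c * r) / (x * c ^ 2))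
      (f' := fun r : ℝ =>
        ((max 0 (1 - |r| / x) : ℝ) : ℂ) * Complex.exp (-(Complex.I * r * t))) ?_
        (hcont.intervalIntegrable _ _)
    · rw [this]; simp; field_simp; ring
    · intro r hr
      rw [Set.uIcc_of_le (by linarith)] at hr
      have hm : max 0 (1 - |r| / x) = 1 + r / x := by
        rw [abs_of_nonpos hr.2, neg_div, sub_neg_eq_add]
        apply max_eq_right
        have : -1 ≤ r / x := by rw [le_div_iff₀ hx]; linarith [hr.1]
        linarith
      convert ((((hR r).div_const (x : ℂ)).const_add 1).mul (hE r)).div_const c |>.sub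
        ((hE r).div_const (x * c ^ 2)) using 1
      · rfl
      rw [hm, show -(Complex.I * r * t) = c * r by rw [hc]; ring]
      push_cast
      field_simp
      ring
  have h3 : ∫ r : ℝ, ((max 0 (1 - |r| / x) : ℝ) : ℂ) * Complex.exp (-(Complex.I * r * t))
      = ∫ r in (-x)..x,
        ((max 0 (1 - |r| / x) : ℝ) : ℂ) * Complex.exp (-(Complex.I * r * t)) := by
    rw [intervalIntegral.integral_of_le (by linarith)]
    refine (setIntegral_eq_integral_of_forall_compl_eq_zero ?_).symm
    intro r hr
    rw [tent_zero hx hr]; simp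
  rw [h3, ← intervalIntegral.integral_add_adjacent_intervals
    (hcont.intervalIntegrable _ 0) (hcont.intervalIntegrable _ _), h1, h2]
  have hcos : Complex.exp (c * x) + Complex.exp (-(c * x))
      = 2 - 4 * Complex.sin (x * t / 2) ^ 2 := by
    have a := Complex.two_cos (x := (x * t : ℂ))
    have b := Complex.cos_two_mul' (x * t / 2 : ℂ)
    have d := Complex.sin_sq_add_cos_sq (x * t / 2 : ℂ)
    rw [show (2 : ℂ) * (x * t / 2) = x * t by ring] at b
    rw [show c * x = -(x * t : ℂ) * Complex.I by rw [hc]; ring,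
      show -(-(x * t : ℂ) * Complex.I) = (x * t : ℂ) * Complex.I by ring]
    linear_combination -a + 2 * b + 2 * d
  have hc2 : c ^ 2 = -(t : ℂ) ^ 2 := by rw [hc]; ring_nf; simp
  have : Complex.exp (c * x) / (x * c ^ 2) - 1 / c - 1 / (x * c ^ 2)
      = (2 - 4 * Complex.sin (x * t / 2) ^ 2 - Complex.exp (-(c * x))) / (x * c ^ 2)
        - 1 / c - 1 / (x * c ^ 2) := by rw [← hcos]; ring
  rw [this]
  push_cast
  rw [hc2]
  field_simp
  ring

/-- The inverse Fourier transform of a Polya kernel: if `μ` has positive support and a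
finite mean, then for `t ≠ 0`,
`(1/2π) ∫_ℝ k_μ(r) e^{-irt} dr = (1/2π) ∫₀^∞ x * sinc(xt/2)² dμ(x) ≥ 0`. -/
theorem polya_kernel_fourier_sinc (μ : Measure ℝ) [IsProbabilityMeasure μ]
    (hμ : μ (Set.Iic 0) = 0)
    (hmean : Integrable (fun x : ℝ => x) μ)
    (k : ℝ → ℝ)
    (hk : ∀ r : ℝ, k r = ∫ x in Set.Ioi (0 : ℝ), max 0 (1 - |r| / x) ∂μ)
    (t : ℝ) (ht : t ≠ 0) :
    (1 / (2 * π) : ℂ) * ∫ r : ℝ, (k r : ℂ) * Complex.exp (-(Complex.I * r * t))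
      = ((1 / (2 * π)) *
          ∫ x in Set.Ioi (0 : ℝ), x * (Real.sin (x * t / 2) / (x * t / 2)) ^ 2 ∂μ : ℝ) ∧
    0 ≤ (1 / (2 * π)) *
          ∫ x in Set.Ioi (0 : ℝ), x * (Real.sin (x * t / 2) / (x * t / 2)) ^ 2 ∂μ := by
  have hnn : 0 ≤ (1 / (2 * π)) *
          ∫ x in Set.Ioi (0 : ℝ), x * (Real.sin (x * t / 2) / (x * t / 2)) ^ 2 ∂μ := by
    refine mul_nonneg (by positivity) (setIntegral_nonneg measurableSet_Ioi ?_)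
    intro x hx
    have : 0 < x := hx
    positivity
  refine ⟨?_, hnn⟩
  have hpos : ∀ᵐ x ∂(μ.restrict (Set.Ioi 0)), (0 : ℝ) < x :=
    ae_restrict_mem measurableSet_Ioi
  have hmeas : Measurable (fun p : ℝ × ℝ =>
      ((max 0 (1 - |p.2| / p.1) : ℝ) : ℂ) * Complex.exp (-(Complex.I * p.2 * t))) := by
    fun_prop
  have hint : Integrable (fun p : ℝ × ℝ =>
      ((max 0 (1 - |p.2| / p.1) : ℝ) : ℂ) * Complex.exp (-(Complex.I * p.2 * t)))
      ((μ.restrict (Set.Ioi 0)).prod volume) := by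
    rw [integrable_prod_iff hmeas.aestronglyMeasurable]
    constructor
    · filter_upwards [hpos] with x hx
      refine (ind_int (x := x)).mono' (by fun_prop) (Filter.Eventually.of_forall fun r => ?_)
      rw [norm_f]; exact tent_le hx
    · refine (hmean.restrict.const_mul 2).mono'
        (hmeas.norm.stronglyMeasurable.integral_prod_right'.aestronglyMeasurable) ?_
      filter_upwards [hpos] with x hx
      simp only [norm_f]
      rw [norm_eq_abs, abs_of_nonneg (integral_nonneg fun r => le_max_left _ _)]
      calc _ ≤ ∫ r, (Set.Ioc (-x) x).indicator (fun _ => (1 : ℝ)) r :=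
            integral_mono_of_nonneg (Filter.Eventually.of_forall fun r => le_max_left _ _)
              ind_int (Filter.Eventually.of_forall fun r => tent_le hx)
        _ = 2 * x := by
            rw [integral_indicator measurableSet_Ioc]
            simp
            rw [max_eq_left] <;> linarith
  rw [Complex.ofReal_mul]
  congr 1
  · push_cast; rfl
  calc ∫ r : ℝ, (k r : ℂ) * Complex.exp (-(Complex.I * r * t))
      = ∫ r : ℝ, ∫ x in Set.Ioi (0 : ℝ),
        ((max 0 (1 - |r| / x) : ℝ) : ℂ) * Complex.exp (-(Complex.I * r * t)) ∂μ := by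
        congr 1; ext r
        rw [hk, integral_mul_const, integral_complex_ofReal]
    _ = ∫ x in Set.Ioi (0 : ℝ), (∫ r : ℝ,
        ((max 0 (1 - |r| / x) : ℝ) : ℂ) * Complex.exp (-(Complex.I * r * t))) ∂μ :=
        (integral_integral_swap hint).symm
    _ = ∫ x in Set.Ioi (0 : ℝ),
        ((x * (Real.sin (x * t / 2) / (x * t / 2)) ^ 2 : ℝ) : ℂ) ∂μ := by
        refine integral_congr_ae ?_
        filter_upwards [hpos] with x hx
        exact tent_fourier hx ht
    _ = _ := integral_complex_ofReal
end

section
/- Let μ be a probability measure on ℝ with μ((−∞,0]) = 0 such that C := ∫₀^∞ x^{−1} dμ(x) < ∞, and let μ̃ be the probability measure on ℝ with density x ↦ 1/(C x) with respect to μ. Then for every r ≥ 0, the Polya kernel satisfies k_μ(r) = μ((r, ∞)) − C · r · μ̃((r, ∞)); equivalently, k_μ(r) = (1 − F(r)) − C r (1 − F̃(r)), where F and F̃ are the cumulative distribution functions of μ and μ̃. -/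
open MeasureTheory

/-- First claim of Theorem 2.3: if `C = ∫₀^∞ x⁻¹ dμ(x) < ∞` and `μ̃` has density
`1/(C x)` with respect to `μ`, then for `r ≥ 0`,
`k_μ(r) = μ((r,∞)) - C r μ̃((r,∞))`, i.e. `k_μ(r) = (1 - F(r)) - C r (1 - F̃(r))`. -/
theorem polya_kernel_special_case_cdf (μ : Measure ℝ) [IsProbabilityMeasure μ]
    (hμ : μ (Set.Iic 0) = 0)
    (hC : Integrable (fun x : ℝ => x⁻¹) μ)
    (C : ℝ) (hCdef : C = ∫ x in Set.Ioi (0 : ℝ), x⁻¹ ∂μ)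
    (μtilde : Measure ℝ)
    (hμtilde : μtilde = μ.withDensity (fun x => ENNReal.ofReal ((C * x)⁻¹)))
    (k : ℝ → ℝ)
    (hk : ∀ r : ℝ, k r = ∫ x in Set.Ioi (0 : ℝ), max 0 (1 - |r| / x) ∂μ)
    (r : ℝ) (hr : 0 ≤ r) :
    k r = (μ (Set.Ioi r)).toReal - C * r * (μtilde (Set.Ioi r)).toReal := by
  have h1 : μ (Set.Ioi (0 : ℝ)) = 1 := by
    have h := prob_compl_eq_one_iff (μ := μ) (measurableSet_Iic (a := (0 : ℝ)))
    rw [Set.compl_Iic] at h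
    exact h.2 hμ
  have hCpos : 0 < C := by
    rw [hCdef, setIntegral_pos_iff_support_of_nonneg_ae _ hC.integrableOn]
    · have : (Function.support (fun x : ℝ => x⁻¹)) ∩ Set.Ioi 0 = Set.Ioi 0 := by
        apply Set.inter_eq_right.2
        intro x hx
        exact inv_ne_zero (ne_of_gt hx)
      rw [this, h1]
      exact one_pos
    · filter_upwards [ae_restrict_mem measurableSet_Ioi] with x hx
      exact inv_nonneg.2 (le_of_lt hx)
  have ht : (μtilde (Set.Ioi r)).toReal = C⁻¹ * ∫ x in Set.Ioi r, x⁻¹ ∂μ := by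
    rw [hμtilde, withDensity_apply _ measurableSet_Ioi, ← integral_const_mul,
      integral_eq_lintegral_of_nonneg_ae]
    · simp only [mul_inv]
    · filter_upwards [ae_restrict_mem measurableSet_Ioi] with x hx
      have hx' : 0 < x := lt_of_le_of_lt hr hx
      simp only [Pi.zero_apply]
      positivity
    · exact (hC.integrableOn.const_mul _).aestronglyMeasurable
  have hk' : k r = ∫ x in Set.Ioi r, (1 - r * x⁻¹) ∂μ := by
    rw [hk, abs_of_nonneg hr, ← integral_indicator measurableSet_Ioi,
      ← integral_indicator measurableSet_Ioi]
    congr 1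
    ext x
    by_cases hx : r < x
    · have hx0 : 0 < x := lt_of_le_of_lt hr hx
      rw [Set.indicator_of_mem (Set.mem_Ioi.2 hx0), Set.indicator_of_mem (Set.mem_Ioi.2 hx),
        max_eq_right, div_eq_mul_inv]
      rw [sub_nonneg, div_le_one hx0]
      exact hx.le
    · rw [Set.indicator_of_notMem (s := Set.Ioi r) (by simpa using hx)]
      by_cases hx0 : 0 < x
      · rw [Set.indicator_of_mem (Set.mem_Ioi.2 hx0), max_eq_left]
        rw [sub_nonpos, one_le_div hx0]
        exact not_lt.1 hx
      · rw [Set.indicator_of_notMem (by simpa using hx0)]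
  rw [hk', ht, integral_sub (integrable_const _) (hC.integrableOn.const_mul _),
    integral_const_mul]
  simp only [integral_const, measureReal_def, Measure.restrict_apply_univ, smul_eq_mul, mul_one]
  field_simp
end

section
/- Let μ be a probability measure on ℝ with μ((−∞,0]) = 0 such that C := ∫₀^∞ x^{−1} dμ(x) < ∞ and ∫₀^∞ x dμ(x) < ∞, and let μ̃ be the probability measure on ℝ with density x ↦ 1/(C x) with respect to μ, with characteristic function φ̃(t) = ∫₀^∞ e^{i t x} dμ̃(x). Then for every t ≠ 0, the Fourier transform of the Polya kernel satisfies ∫_ℝ k_μ(r) e^{i r t} dr = (C/t²) · (2 − φ̃(t) − φ̃(−t)). -/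
open MeasureTheory


lemma polya_aux_int (x t : ℝ) (hx : 0 < x) :
    Integrable (fun r : ℝ => ((max 0 (1 - |r| / x) : ℝ) : ℂ) * Complex.exp (Complex.I * r * t)) := by
  have hc : Continuous (fun r : ℝ => ((max 0 (1 - |r| / x) : ℝ) : ℂ) * Complex.exp (Complex.I * r * t)) := by
    fun_prop
  apply hc.integrable_of_hasCompactSupport
  apply HasCompactSupport.intro (isCompact_Icc (a := -x) (b := x))
  intro r hr
  have : x < |r| := by
    by_contra h
    exact hr (abs_le.mp (not_lt.mp h))
  have h1 : 1 < |r| / x := by rwa [lt_div_iff₀ hx, one_mul]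
  rw [max_eq_left (by linarith)]
  simp

lemma polya_aux_norm (x t r : ℝ) :
    ‖((max 0 (1 - |r| / x) : ℝ) : ℂ) * Complex.exp (Complex.I * r * t)‖ = max 0 (1 - |r| / x) := by
  have : Complex.I * r * t = ((r * t : ℝ) : ℂ) * Complex.I := by push_cast; ring
  rw [norm_mul, this, Complex.norm_exp_ofReal_mul_I, mul_one, Complex.norm_real, Real.norm_eq_abs,
    abs_of_nonneg (le_max_left _ _)]

lemma polya_aux_half (x t : ℝ) (hx : 0 < x) (ht : t ≠ 0) :
    ∫ r in Set.Ioi (0:ℝ), ((max 0 (1 - |r| / x) : ℝ) : ℂ) * Complex.exp (Complex.I * r * t)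
      = (1 - Complex.exp (Complex.I * t * x)) / (t ^ 2 * x) + Complex.I / t := by
  have htc : (t : ℂ) ≠ 0 := by exact_mod_cast ht
  have hxc : (x : ℂ) ≠ 0 := by exact_mod_cast hx.ne'
  have h1 : ∫ r in Set.Ioi (0:ℝ), ((max 0 (1 - |r| / x) : ℝ) : ℂ) * Complex.exp (Complex.I * r * t)
      = ∫ r in Set.Ioc (0:ℝ) x, ((max 0 (1 - |r| / x) : ℝ) : ℂ) * Complex.exp (Complex.I * r * t) := by
    apply setIntegral_eq_of_subset_of_forall_sdiff_eq_zero measurableSet_Ioi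
    · exact fun r hr => hr.1
    · rintro r ⟨hr0, hr⟩
      have hr0 : 0 < r := hr0
      have : x < r := by
        by_contra h
        exact hr ⟨hr0, not_lt.mp h⟩
      have h1 : 1 < |r| / x := by rwa [lt_div_iff₀ hx, one_mul, abs_of_pos hr0]
      rw [max_eq_left (by linarith)]
      simp
  have h2 : ∫ r in Set.Ioc (0:ℝ) x, ((max 0 (1 - |r| / x) : ℝ) : ℂ) * Complex.exp (Complex.I * r * t)
      = ∫ r in Set.Ioc (0:ℝ) x, (1 - (r:ℂ) / x) * Complex.exp (Complex.I * r * t) := by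
    apply setIntegral_congr_fun measurableSet_Ioc
    rintro r ⟨hr0, hr⟩
    have : r / x ≤ 1 := by rwa [div_le_one hx]
    simp only
    rw [abs_of_pos hr0, max_eq_right (by linarith)]
    push_cast
    rfl
  rw [h1, h2, ← intervalIntegral.integral_of_le hx.le]
  have hd : ∀ r ∈ Set.uIcc 0 x, HasDerivAt (fun r : ℝ =>
      (1 - (r:ℂ) / x) * Complex.exp (Complex.I * r * t) / (Complex.I * t)
        - Complex.exp (Complex.I * r * t) / (t ^ 2 * x))
      ((1 - (r:ℂ) / x) * Complex.exp (Complex.I * r * t)) r := by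
    intro r _
    have hr : HasDerivAt (fun r : ℝ => (r : ℂ)) 1 r := Complex.ofRealCLM.hasDerivAt
    have he : HasDerivAt (fun r : ℝ => Complex.exp (Complex.I * r * t))
        (Complex.exp (Complex.I * r * t) * (Complex.I * 1 * t)) r :=
      ((hr.const_mul Complex.I).mul_const (t : ℂ)).cexp
    have := ((((hr.div_const (x:ℂ)).const_sub 1).mul he).div_const (Complex.I * t)).sub
      (he.div_const ((t:ℂ) ^ 2 * x))
    refine HasDerivAt.congr_deriv this ?_
    have hI := Complex.I_sq
    field_simp
    linear_combination (-1 : ℂ) * hI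
  rw [intervalIntegral.integral_eq_sub_of_hasDerivAt hd]
  · simp only [Complex.ofReal_zero, mul_zero, zero_mul, Complex.exp_zero, zero_div]
    rw [div_self hxc, show Complex.I * (x:ℂ) * t = Complex.I * t * x by ring]
    have hI := Complex.I_sq
    field_simp
    linear_combination (-(t:ℂ) * x) * hI
  · apply Continuous.intervalIntegrable
    fun_prop

lemma polya_aux_full (x t : ℝ) (hx : 0 < x) (ht : t ≠ 0) :
    ∫ r : ℝ, ((max 0 (1 - |r| / x) : ℝ) : ℂ) * Complex.exp (Complex.I * r * t)
      = (2 - Complex.exp (Complex.I * t * x) - Complex.exp (Complex.I * (-t : ℝ) * x)) / (t ^ 2 * x) := by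
  have hi := polya_aux_int x t hx
  rw [← intervalIntegral.integral_Iic_add_Ioi (b := 0) hi.integrableOn hi.integrableOn,
    polya_aux_half x t hx ht]
  have := integral_comp_neg_Ioi (0:ℝ)
    (fun r : ℝ => ((max 0 (1 - |r| / x) : ℝ) : ℂ) * Complex.exp (Complex.I * r * t))
  rw [neg_zero] at this
  rw [← this]
  have h2 := polya_aux_half x (-t) hx (neg_ne_zero.mpr ht)
  have h3 : ∀ r : ℝ, Complex.I * ((-r : ℝ) : ℂ) * t = Complex.I * r * ((-t : ℝ) : ℂ) := by
    intro r; push_cast; ring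
  simp only [abs_neg, h3]
  rw [h2]
  push_cast
  rw [neg_sq, div_neg]
  ring

lemma polya_aux_bound (x : ℝ) (hx : 0 < x) :
    ∫ r : ℝ, max 0 (1 - |r| / x) ≤ 2 * x := by
  have h : ∀ r : ℝ, max 0 (1 - |r| / x) ≤ (Set.Icc (-x) x).indicator (fun _ => (1:ℝ)) r := by
    intro r
    by_cases hr : r ∈ Set.Icc (-x) x
    · rw [Set.indicator_of_mem hr]
      have : 0 ≤ |r| / x := by positivity
      exact max_le zero_le_one (by linarith)
    · rw [Set.indicator_of_notMem hr]
      have : x < |r| := by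
        by_contra h
        exact hr (abs_le.mp (not_lt.mp h))
      have h1 : 1 < |r| / x := by rwa [lt_div_iff₀ hx, one_mul]
      exact max_le le_rfl (by linarith)
  calc _ ≤ ∫ r : ℝ, (Set.Icc (-x) x).indicator (fun _ => (1:ℝ)) r := by
        apply integral_mono_of_nonneg (Filter.Eventually.of_forall fun r => le_max_left _ _)
        · exact (integrable_indicator_iff measurableSet_Icc).mpr
            (integrableOn_const (by simp))
        · exact Filter.Eventually.of_forall h
    _ = 2 * x := by
        rw [integral_indicator measurableSet_Icc]
        simp [Measure.real, ENNReal.toReal_ofReal (by linarith : (0:ℝ) ≤ x + x)]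
        ring

/-- Second claim of Theorem 2.3: with `C = ∫₀^∞ x⁻¹ dμ(x) < ∞`, `μ̃` the measure with
density `1/(C x)` w.r.t. `μ`, and `φ̃` its characteristic function, the Fourier transform
of the Polya kernel satisfies `∫_ℝ k_μ(r) e^{irt} dr = (C/t²) (2 - φ̃(t) - φ̃(-t))`
for all `t ≠ 0`. -/
theorem polya_kernel_special_case_fourier (μ : Measure ℝ) [IsProbabilityMeasure μ]
    (hμ : μ (Set.Iic 0) = 0)
    (hC : Integrable (fun x : ℝ => x⁻¹) μ)
    (hmean : Integrable (fun x : ℝ => x) μ)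
    (C : ℝ) (hCdef : C = ∫ x in Set.Ioi (0 : ℝ), x⁻¹ ∂μ)
    (μtilde : Measure ℝ)
    (hμtilde : μtilde = μ.withDensity (fun x => ENNReal.ofReal ((C * x)⁻¹)))
    (φtilde : ℝ → ℂ)
    (hφ : ∀ t : ℝ, φtilde t = ∫ x in Set.Ioi (0 : ℝ), Complex.exp (Complex.I * t * x) ∂μtilde)
    (k : ℝ → ℝ)
    (hk : ∀ r : ℝ, k r = ∫ x in Set.Ioi (0 : ℝ), max 0 (1 - |r| / x) ∂μ)
    (t : ℝ) (ht : t ≠ 0) :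
    ∫ r : ℝ, (k r : ℂ) * Complex.exp (Complex.I * r * t)
      = ((C : ℂ) / (t : ℂ) ^ 2) * (2 - φtilde t - φtilde (-t)) := by
  have hpos : ∀ᵐ x ∂μ, 0 < x := by
    rw [ae_iff]
    simpa [Set.Iic] using hμ
  have hres : μ.restrict (Set.Ioi 0) = μ := Measure.restrict_eq_self_of_ae_mem hpos
  rw [hres] at hCdef
  simp only [hres] at hk
  have hCpos : 0 < C := by
    rw [hCdef, integral_pos_iff_support_of_nonneg_ae _ hC]
    · have : μ (Function.support fun x : ℝ => x⁻¹) = 1 := by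
        rw [← measure_univ (μ := μ)]
        apply measure_congr
        filter_upwards [hpos] with x hx
        exact propext ⟨fun _ => trivial, fun _ => (inv_pos.mpr hx).ne'⟩
      simp [this]
    · filter_upwards [hpos] with x hx
      exact (inv_pos.mpr hx).le
  have hCc : (C : ℂ) ≠ 0 := by exact_mod_cast hCpos.ne'
  have htc : (t : ℂ) ≠ 0 := by exact_mod_cast ht
  have hφ' : ∀ s : ℝ, φtilde s = ∫ x, ((C * x)⁻¹ : ℂ) * Complex.exp (Complex.I * s * x) ∂μ := by
    intro s
    rw [hφ, hμtilde, restrict_withDensity measurableSet_Ioi, hres,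
      integral_withDensity_eq_integral_toReal_smul (by fun_prop) (by simp)]
    apply integral_congr_ae
    filter_upwards [hpos] with x hx
    rw [ENNReal.toReal_ofReal (by positivity), Complex.real_smul]
    push_cast
    rfl
  have hint : ∀ s : ℝ, Integrable (fun x : ℝ => ((C * x)⁻¹ : ℂ) * Complex.exp (Complex.I * s * x)) μ := by
    intro s
    apply Integrable.mono' (hC.const_mul C⁻¹)
    · apply Measurable.aestronglyMeasurable
      fun_prop
    · filter_upwards [hpos] with x hx
      have : Complex.I * s * x = ((s * x : ℝ) : ℂ) * Complex.I := by push_cast; ring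
      rw [norm_mul, this, Complex.norm_exp_ofReal_mul_I, mul_one, ← Complex.ofReal_mul,
        ← Complex.ofReal_inv, Complex.norm_real, Real.norm_eq_abs, abs_of_pos (by positivity), mul_inv]
  have hcint : Integrable (fun x : ℝ => ((C * x)⁻¹ : ℂ)) μ := by
    simpa using hint 0
  have hcval : ∫ x : ℝ, ((C * x)⁻¹ : ℂ) ∂μ = 1 := by
    have : ∀ x : ℝ, ((C * x)⁻¹ : ℂ) = ((C⁻¹ * x⁻¹ : ℝ) : ℂ) := by
      intro x; push_cast; rw [mul_inv]
    simp only [this]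
    rw [integral_complex_ofReal, integral_const_mul, ← hCdef, inv_mul_cancel₀ hCpos.ne']
    simp
  have hL : ∀ r : ℝ, (k r : ℂ) * Complex.exp (Complex.I * r * t)
      = ∫ x, ((max 0 (1 - |r| / x) : ℝ) : ℂ) * Complex.exp (Complex.I * r * t) ∂μ := by
    intro r
    rw [integral_mul_const, integral_complex_ofReal, hk]
  simp only [hL]
  have hmeas : Measurable (Function.uncurry (fun (r x : ℝ) =>
      ((max 0 (1 - |r| / x) : ℝ) : ℂ) * Complex.exp (Complex.I * r * t))) := by
    unfold Function.uncurry
    fun_prop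
  rw [integral_integral_swap]
  · calc _ = ∫ x : ℝ, (C / t ^ 2 : ℂ) * (2 * ((C * x)⁻¹ : ℂ)
            - ((C * x)⁻¹ : ℂ) * Complex.exp (Complex.I * t * x)
            - ((C * x)⁻¹ : ℂ) * Complex.exp (Complex.I * (-t : ℝ) * x)) ∂μ := by
          apply integral_congr_ae
          filter_upwards [hpos] with x hx
          have hxc : (x : ℂ) ≠ 0 := by exact_mod_cast hx.ne'
          rw [polya_aux_full x t hx ht]
          field_simp
      _ = _ := by
          have h2 : Integrable (fun x : ℝ => 2 * ((C * x)⁻¹ : ℂ)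
            - ((C * x)⁻¹ : ℂ) * Complex.exp (Complex.I * t * x)) μ := (hcint.const_mul 2).sub (hint t)
          rw [integral_const_mul, integral_sub h2 (hint (-t)),
            integral_sub (hcint.const_mul 2) (hint t), integral_const_mul, hcval, hφ' t, hφ' (-t),
            mul_one]
  · rw [integrable_prod_iff' hmeas.aestronglyMeasurable]
    constructor
    · filter_upwards [hpos] with x hx
      exact polya_aux_int x t hx
    · apply Integrable.mono' (hmean.const_mul 2)
      · exact (hmeas.aestronglyMeasurable (μ := volume.prod μ)).norm.prod_swap.integral_prod_right'
      · filter_upwards [hpos] with x hx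
        simp only [Function.uncurry, polya_aux_norm]
        have h0 : 0 ≤ ∫ r : ℝ, max 0 (1 - |r| / x) := integral_nonneg fun r => le_max_left _ _
        rw [Real.norm_of_nonneg h0]
        exact polya_aux_bound x hx
end

section
/- Let μ be a probability measure on ℝ with μ((−∞,0]) = 0 such that ∫₀^∞ x dμ(x) < ∞, and let k_μ be its Polya kernel. Then ∫_ℝ k_μ(r) dr = ∫₀^∞ x dμ(x); that is, the area under the Polya kernel equals the mean of the distribution μ. -/
open MeasureTheory

lemma tent_integrable (x : ℝ) (hx : 0 < x) :
    Integrable (fun r : ℝ => max 0 (1 - |r| / x)) := by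
  apply Continuous.integrable_of_hasCompactSupport
  · fun_prop
  · apply HasCompactSupport.intro (isCompact_Icc (a := -x) (b := x))
    intro r hr
    have h : x < |r| := by
      by_contra h
      exact hr (abs_le.mp (not_lt.mp h))
    apply max_eq_left
    have : 1 < |r| / x := by rwa [one_lt_div hx]
    linarith

lemma tent_integral (x : ℝ) (hx : 0 < x) :
    ∫ r : ℝ, max 0 (1 - |r| / x) = x := by
  rw [integral_comp_abs (f := fun r => max 0 (1 - r / x))]
  have h : ∫ r in Set.Ioi (0:ℝ), max 0 (1 - r / x) = ∫ r in Set.Ioc (0:ℝ) x, (1 - r / x) := by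
    rw [setIntegral_eq_of_subset_of_forall_sdiff_eq_zero measurableSet_Ioi
      (show Set.Ioc (0:ℝ) x ⊆ Set.Ioi 0 from Set.Ioc_subset_Ioi_self)]
    · apply setIntegral_congr_fun measurableSet_Ioc
      intro r hr
      apply max_eq_right
      have : r / x ≤ 1 := (div_le_one hx).2 hr.2
      linarith
    · intro r hr
      have h : x < r := by
        by_contra h
        exact hr.2 ⟨hr.1, not_lt.mp h⟩
      apply max_eq_left
      have : 1 < r / x := by rwa [one_lt_div hx]
      linarith
  rw [h, ← intervalIntegral.integral_of_le hx.le, intervalIntegral.integral_sub (by simp)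
    (Continuous.intervalIntegrable (by fun_prop) _ _)]
  simp
  field_simp
  ring

/-- Theorem 2.4: the area under the Polya kernel equals the mean of the distribution:
if `μ` has positive support and finite mean, then `∫_ℝ k_μ(r) dr = ∫₀^∞ x dμ(x)`. -/
theorem polya_kernel_area_under_curve (μ : Measure ℝ) [IsProbabilityMeasure μ]
    (hμ : μ (Set.Iic 0) = 0)
    (hmean : Integrable (fun x : ℝ => x) μ)
    (k : ℝ → ℝ)
    (hk : ∀ r : ℝ, k r = ∫ x in Set.Ioi (0 : ℝ), max 0 (1 - |r| / x) ∂μ) :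
    ∫ r : ℝ, k r = ∫ x in Set.Ioi (0 : ℝ), x ∂μ := by
  simp_rw [hk]
  rw [integral_integral_swap]
  · exact setIntegral_congr_fun measurableSet_Ioi fun x hx => tent_integral x hx
  · have hm : Measurable (Function.uncurry fun (r x : ℝ) => max 0 (1 - |r| / x)) := by
      unfold Function.uncurry
      have : Measurable (fun p : ℝ × ℝ => |p.1|) := continuous_fst.abs.measurable
      exact measurable_const.max (measurable_const.sub (this.div measurable_snd))
    rw [integrable_prod_iff' hm.aestronglyMeasurable]
    constructor
    · exact (ae_restrict_mem measurableSet_Ioi).mono fun x hx => tent_integrable x hx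
    · refine (hmean.integrableOn (s := Set.Ioi 0)).congr ?_
      refine (ae_restrict_mem measurableSet_Ioi).mono fun x hx => ?_
      simp only [Function.uncurry, Real.norm_eq_abs]
      refine (tent_integral x hx).symm.trans ?_
      congr 1
      ext r
      exact (abs_of_nonneg (le_max_left _ _)).symm
end

section
/- Let k : ℝ → ℝ be a continuous, even function taking values in [0,1] with k(0) = 1, lim_{r→∞} k(r) = 0, k convex on [0,∞), and suppose k is twice continuously differentiable on (0,∞). Then for every r ≥ 0, k(r) = ∫₀^∞ max{0, 1 − r/x} · x k''(x) dx. In particular, x ↦ x k''(x) is a probability density on (0,∞), and the function F(x) = 1 − k(x) + x k'(x) is the cumulative distribution function of the measure in Polya's criterion, with F'(x) = x k''(x) for x > 0. -/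
open MeasureTheory Filter

/-- The Rahimi–Recht identity recovered from Polya's criterion: if `k` is a continuous,
even, `[0,1]`-valued function with `k 0 = 1`, vanishing at infinity, convex on `[0,∞)`,
and twice continuously differentiable on `(0,∞)` with first and second derivatives `k'`
and `k''`, then `k(r) = ∫₀^∞ max 0 (1 - r/x) · x k''(x) dx` for `r ≥ 0`; moreover
`x ↦ x k''(x)` is a probability density on `(0,∞)` and
`F(x) = 1 - k(x) + x k'(x)` satisfies `F'(x) = x k''(x)` on `(0,∞)`. -/
theorem polya_rahimi_recht_density (k k' k'' : ℝ → ℝ)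
    (hcont : Continuous k)
    (heven : ∀ r : ℝ, k (-r) = k r)
    (hrange : ∀ r : ℝ, k r ∈ Set.Icc (0 : ℝ) 1)
    (h0 : k 0 = 1)
    (hlim : Tendsto k atTop (nhds 0))
    (hconv : ∀ r₁ r₂ t : ℝ, 0 ≤ r₁ → 0 ≤ r₂ → t ∈ Set.Icc (0 : ℝ) 1 →
      k (t * r₁ + (1 - t) * r₂) ≤ t * k r₁ + (1 - t) * k r₂)
    (hk' : ∀ x ∈ Set.Ioi (0 : ℝ), HasDerivAt k (k' x) x)
    (hk'' : ∀ x ∈ Set.Ioi (0 : ℝ), HasDerivAt k' (k'' x) x)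
    (hk''cont : ContinuousOn k'' (Set.Ioi (0 : ℝ))) :
    (∀ r : ℝ, 0 ≤ r →
        k r = ∫ x in Set.Ioi (0 : ℝ), max 0 (1 - r / x) * (x * k'' x)) ∧
    (∀ x ∈ Set.Ioi (0 : ℝ), 0 ≤ x * k'' x) ∧
    (∫ x in Set.Ioi (0 : ℝ), x * k'' x) = 1 ∧
    (∀ x ∈ Set.Ioi (0 : ℝ),
        HasDerivAt (fun y => 1 - k y + y * k' y) (x * k'' x) x) := by
  have hcvx : ConvexOn ℝ (Set.Ici (0:ℝ)) k := by
    refine ⟨convex_Ici 0, ?_⟩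
    intro x hx y hy a b ha hb hab
    have h := hconv x y a hx hy ⟨ha, by linarith⟩
    have hb' : 1 - a = b := by linarith
    rw [hb'] at h
    simpa [smul_eq_mul] using h
  have htan : ∀ x y : ℝ, 0 < x → 0 ≤ y → k' x * (y - x) ≤ k y - k x := by
    intro x y hx hy
    rcases lt_trichotomy x y with h | h | h
    · have h1 := hcvx.le_slope_of_hasDerivAt (Set.mem_Ici.2 hx.le) (Set.mem_Ici.2 hy) h (hk' x hx)
      rw [slope_def_field, le_div_iff₀ (by linarith)] at h1
      exact h1
    · subst h; simp
    · have h1 := hcvx.slope_le_of_hasDerivAt (Set.mem_Ici.2 hy) (Set.mem_Ici.2 hx.le) h (hk' x hx)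
      rw [slope_def_field, div_le_iff₀ (by linarith)] at h1
      linarith
  have hneg : ∀ x : ℝ, 0 < x → k' x ≤ 0 := by
    intro x hx
    by_contra! hc
    have hp : 0 < 2 / k' x := by positivity
    have h1 := htan x (x + 2 / k' x) hx (by linarith)
    have h2 : k' x * (x + 2 / k' x - x) = 2 := by field_simp; ring
    have h3 := (hrange (x + 2 / k' x)).2
    have h4 := (hrange x).1
    linarith
  have hmono : MonotoneOn k' (Set.Ioi 0) := by
    intro x hx y hy hxy
    rcases hxy.eq_or_lt with h | h
    · rw [h]
    · have h1 := htan x y hx (le_of_lt hy)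
      have h2 := htan y x hy (le_of_lt hx)
      by_contra! hc
      nlinarith
  have hpos : ∀ x : ℝ, 0 < x → 0 ≤ k'' x := by
    intro x hx
    have h1 : 0 ≤ derivWithin k' (Set.Ioi 0) x := hmono.derivWithin_nonneg
    rwa [derivWithin_of_isOpen isOpen_Ioi hx, (hk'' x hx).deriv] at h1
  have hmain : ∀ r : ℝ, 0 ≤ r → ∫ x in Set.Ioi r, (x - r) * k'' x = k r := by
    intro r hr
    have hc : ContinuousWithinAt (fun x => (x - r) * k' x - k x) (Set.Ici r) r := by
      rw [← Set.Ioi_insert, continuousWithinAt_insert_self]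
      apply ContinuousWithinAt.sub _ hcont.continuousWithinAt
      have hz : Tendsto (fun x => k x - k r) (nhdsWithin r (Set.Ioi r)) (nhds 0) := by
        have : Tendsto (fun x => k x - k r) (nhds r) (nhds (k r - k r)) :=
          (hcont.sub continuous_const).tendsto r
        rw [sub_self] at this
        exact this.mono_left nhdsWithin_le_nhds
      have : Tendsto (fun x => (x - r) * k' x) (nhdsWithin r (Set.Ioi r)) (nhds 0) := by
        refine tendsto_of_tendsto_of_tendsto_of_le_of_le' hz tendsto_const_nhds ?_ ?_
        · filter_upwards [self_mem_nhdsWithin] with x hx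
          have hx' : r < x := hx
          have := htan x r (by linarith) hr
          linarith
        · filter_upwards [self_mem_nhdsWithin] with x hx
          have hx' : r < x := hx
          exact mul_nonpos_of_nonneg_of_nonpos (by linarith) (hneg x (by linarith))
      simpa [ContinuousWithinAt] using this
    have hd : ∀ x ∈ Set.Ioi r, HasDerivAt (fun x => (x - r) * k' x - k x) ((x - r) * k'' x) x := by
      intro x hx
      have hx' : r < x := hx
      have hx0 : x ∈ Set.Ioi (0:ℝ) := Set.mem_Ioi.2 (by linarith)
      have h := (((hasDerivAt_id x).sub_const r).mul (hk'' x hx0)).sub (hk' x hx0)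
      exact h.congr_deriv (by simp)
    have hl : Tendsto (fun x => (x - r) * k' x - k x) atTop (nhds 0) := by
      have hz : Tendsto (fun x => 2 * (k x - k (x / 2))) atTop (nhds 0) := by
        have h2 : Tendsto (fun x : ℝ => k (x / 2)) atTop (nhds 0) :=
          hlim.comp (tendsto_id.atTop_div_const (by norm_num))
        simpa using (hlim.sub h2).const_mul 2
      have h1 : Tendsto (fun x => (x - r) * k' x) atTop (nhds 0) := by
        refine tendsto_of_tendsto_of_tendsto_of_le_of_le' hz tendsto_const_nhds ?_ ?_
        · filter_upwards [eventually_gt_atTop r] with x hx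
          have h3 := htan x (x / 2) (by linarith) (by linarith)
          have h4 := hneg x (by linarith)
          nlinarith
        · filter_upwards [eventually_gt_atTop r] with x hx
          exact mul_nonpos_of_nonneg_of_nonpos (by linarith) (hneg x (by linarith))
      simpa using h1.sub hlim
    have h := integral_Ioi_of_hasDerivAt_of_nonneg hc hd (fun x hx => by
      have hx' : r < x := hx
      exact mul_nonneg (by linarith) (hpos x (by linarith))) hl
    rw [h]; simp
  refine ⟨?_, ?_, ?_, ?_⟩
  · intro r hr
    rw [← hmain r hr]
    have h1 : ∫ x in Set.Ioi r, (x - r) * k'' x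
        = ∫ x in Set.Ioi r, max 0 (1 - r / x) * (x * k'' x) := by
      apply setIntegral_congr_fun measurableSet_Ioi
      intro x hx
      have hx' : r < x := hx
      have hx0 : 0 < x := by linarith
      have : r / x ≤ 1 := by rw [div_le_one hx0]; exact hx'.le
      simp only
      rw [max_eq_right (by linarith)]
      field_simp
    rw [h1]
    symm
    apply setIntegral_eq_of_subset_of_forall_sdiff_eq_zero measurableSet_Ioi
      (Set.Ioi_subset_Ioi hr)
    intro x hx
    have hx0 : 0 < x := hx.1
    have hx1 : x ≤ r := not_lt.1 hx.2
    have : 1 ≤ r / x := by rw [one_le_div hx0]; exact hx1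
    rw [max_eq_left (by linarith), zero_mul]
  · intro x hx
    exact mul_nonneg (le_of_lt hx) (hpos x hx)
  · have := hmain 0 le_rfl
    simpa [h0] using this
  · intro x hx
    have h := ((hk' x hx).const_sub 1).add ((hasDerivAt_id x).mul (hk'' x hx))
    exact h.congr_deriv (by simp)
end

section
/- For every shape s > 1, scale θ > 0, and r ≥ 0: ∫₀^∞ max{0, 1 − r/x} · x^{s−1} e^{−x/θ} / (Γ(s) θ^s) dx = [Γ(s, r/θ) − (r/θ) Γ(s−1, r/θ)] / Γ(s), where Γ(s) is the gamma function and Γ(s, t) = ∫_t^∞ u^{s−1} e^{−u} du is the upper incomplete gamma function. -/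
open MeasureTheory Real

/-- Upper incomplete gamma function `Γ(s, t) = ∫_t^∞ u^{s-1} e^{-u} du`. -/
noncomputable def upperIncompleteGamma (s t : ℝ) : ℝ :=
  ∫ u in Set.Ioi t, u ^ (s - 1) * Real.exp (-u)

/-- Equation (9): the Polya kernel constructed from the gamma distribution
`Gamma(s, θ)` (shape `s > 1`, scale `θ > 0`) equals
`[Γ(s, r/θ) - (r/θ) Γ(s-1, r/θ)] / Γ(s)` for `r ≥ 0`. -/
theorem polya_kernel_gamma (s θ : ℝ) (hs : 1 < s) (hθ : 0 < θ) (r : ℝ) (hr : 0 ≤ r) :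
    ∫ x in Set.Ioi (0 : ℝ),
        max 0 (1 - r / x) * (x ^ (s - 1) * Real.exp (-(x / θ)) / (Real.Gamma s * θ ^ s))
      = (upperIncompleteGamma s (r / θ)
          - (r / θ) * upperIncompleteGamma (s - 1) (r / θ)) / Real.Gamma s := by
  have hG : Real.Gamma s ≠ 0 := (Real.Gamma_pos_of_pos (by linarith)).ne'
  have ht : 0 ≤ r / θ := div_nonneg hr hθ.le
  have hsub : Set.Ioi (r / θ) ⊆ Set.Ioi (0 : ℝ) := Set.Ioi_subset_Ioi ht
  have h1 : IntegrableOn (fun u : ℝ => u ^ (s - 1) * Real.exp (-u)) (Set.Ioi (r / θ)) := by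
    have := (Real.GammaIntegral_convergent (s := s) (by linarith)).mono_set hsub
    simpa only [mul_comm] using this
  have h2 : IntegrableOn (fun u : ℝ => u ^ (s - 1 - 1) * Real.exp (-u)) (Set.Ioi (r / θ)) := by
    have := (Real.GammaIntegral_convergent (s := s - 1) (by linarith)).mono_set hsub
    simpa only [mul_comm] using this
  unfold upperIncompleteGamma
  rw [← integral_const_mul, ← integral_sub h1 (h2.const_mul _), ← integral_div]
  rw [setIntegral_eq_of_subset_of_forall_diff_eq_zero measurableSet_Ioi
    (Set.Ioi_subset_Ioi hr) (s := Set.Ioi r)]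
  · have hb : θ * (r / θ) = r := by field_simp
    have := integral_comp_mul_left_Ioi' (fun x : ℝ => max 0 (1 - r / x) *
      (x ^ (s - 1) * Real.exp (-(x / θ)) / (Real.Gamma s * θ ^ s))) (r / θ) hθ
    rw [hb] at this
    rw [← this, smul_eq_mul, ← integral_const_mul]
    refine setIntegral_congr_fun measurableSet_Ioi fun u hu => ?_
    have hu' : r / θ < u := hu
    have hu0 : 0 < u := hsub hu
    have hr' : r < θ * u := by rw [div_lt_iff₀ hθ] at hu'; linarith
    have hm : max 0 (1 - r / (θ * u)) = 1 - r / (θ * u) := by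
      apply max_eq_right
      have := (div_lt_one (by positivity : 0 < θ * u)).2 hr'
      linarith
    have e1 : θ * u / θ = u := by field_simp
    have e2 : u ^ (s - 1) = u ^ (s - 1 - 1) * u := by
      rw [Real.rpow_sub_one hu0.ne' (s - 1)]; field_simp
    have e3 : θ ^ s = θ ^ (s - 1) * θ := by
      rw [Real.rpow_sub_one hθ.ne' s]; field_simp
    have hp : θ ^ (s - 1) ≠ 0 := (Real.rpow_pos_of_pos hθ _).ne'
    simp only [hm, e1]
    rw [Real.mul_rpow hθ.le hu0.le, e3, e2]
    field_simp
  · rintro x ⟨hx, hxr⟩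
    have hx0 : 0 < x := hx
    have hxr' : x ≤ r := not_lt.1 hxr
    have := (one_le_div hx0).2 hxr'
    rw [max_eq_left (by linarith), zero_mul]
end

section
/- For θ > 0, define k : ℝ → ℝ by k(r) = e^{−|r|/θ} − (|r|/θ) E₁(|r|/θ) for r ≠ 0 and k(0) = 1, where E₁(z) = ∫_z^∞ e^{−u}/u du is the exponential integral. Then for every t ≠ 0, ∫_ℝ k(r) e^{i r t} dr = log(1 + θ² t²) / (θ t²). -/
open MeasureTheory Real

/-- The exponential integral `E₁(z) = ∫_z^∞ e^{-u}/u du`. -/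
noncomputable def expIntegralE1 (z : ℝ) : ℝ :=
  ∫ u in Set.Ioi z, Real.exp (-u) / u

open Filter Set Topology in
lemma aux_E2 (a : ℝ) (ha : 0 < a) :
    Real.exp (-a) - a * expIntegralE1 a = ∫ u in Set.Ioi (1:ℝ), Real.exp (-(a * u)) / u ^ 2 := by
  have hexp : IntegrableOn (fun u : ℝ => Real.exp (-(a * u))) (Ioi 1) := by
    simpa using integrableOn_exp_mul_Ioi (a := -a) (by linarith) 1
  have hm1 : AEStronglyMeasurable (fun u : ℝ => Real.exp (-(a * u)) / u)
      (volume.restrict (Ioi 1)) := by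
    apply Measurable.aestronglyMeasurable; fun_prop
  have hm2 : AEStronglyMeasurable (fun u : ℝ => Real.exp (-(a * u)) / u ^ 2)
      (volume.restrict (Ioi 1)) := by
    apply Measurable.aestronglyMeasurable; fun_prop
  have i1 : IntegrableOn (fun u : ℝ => Real.exp (-(a * u)) / u) (Ioi 1) := by
    refine Integrable.mono' hexp hm1 ?_
    filter_upwards [ae_restrict_mem measurableSet_Ioi] with u hu
    have hu : 1 < u := hu
    rw [Real.norm_of_nonneg (by positivity)]
    exact div_le_self (Real.exp_pos _).le hu.le
  have i2 : IntegrableOn (fun u : ℝ => Real.exp (-(a * u)) / u ^ 2) (Ioi 1) := by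
    refine Integrable.mono' hexp hm2 ?_
    filter_upwards [ae_restrict_mem measurableSet_Ioi] with u hu
    have hu : 1 < u := hu
    rw [Real.norm_of_nonneg (by positivity)]
    exact div_le_self (Real.exp_pos _).le (by nlinarith)
  have hE : expIntegralE1 a = ∫ u in Ioi (1:ℝ), Real.exp (-(a * u)) / u := by
    have := integral_comp_mul_left_Ioi' (fun u : ℝ => Real.exp (-u) / u) 1 ha
    rw [mul_one] at this
    rw [expIntegralE1, ← this, smul_eq_mul, ← integral_const_mul]
    apply setIntegral_congr_fun measurableSet_Ioi
    intro u hu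
    have hu : 1 < u := hu
    have : u ≠ 0 := by positivity
    simp only
    field_simp
  have key : ∫ u in Ioi (1:ℝ), (a * (Real.exp (-(a * u)) / u) + Real.exp (-(a * u)) / u ^ 2)
      = 0 - (-(Real.exp (-(a * 1)) / 1)) := by
    apply integral_Ioi_of_hasDerivAt_of_tendsto' (f := fun u : ℝ => -(Real.exp (-(a * u)) / u))
    · intro u hu
      have hu : 1 ≤ u := hu
      have hu0 : u ≠ 0 := by positivity
      have h1 : HasDerivAt (fun u : ℝ => Real.exp (-(a * u))) (Real.exp (-(a * u)) * (-(a * 1))) u :=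
        ((hasDerivAt_id u).const_mul a).neg.exp
      refine (h1.fun_div (hasDerivAt_id' u) hu0).fun_neg.congr_deriv ?_
      field_simp
      ring
    · exact (i1.const_mul a).add i2
    · have h1 : Tendsto (fun u : ℝ => Real.exp (-(a * u))) atTop (𝓝 0) :=
        Real.tendsto_exp_neg_atTop_nhds_zero.comp (tendsto_id.const_mul_atTop ha)
      simpa [div_eq_mul_inv] using (h1.mul tendsto_inv_atTop_zero).neg
  rw [integral_add (i1.const_mul a) i2, integral_const_mul, ← hE] at key
  simp at key
  linarith

lemma aux_int (c t : ℝ) (hc : 0 < c) :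
    Integrable (fun r : ℝ => (Real.exp (-(|r| * c)) : ℂ) * Complex.exp (Complex.I * r * t)) ∧
    ∫ r : ℝ, (Real.exp (-(|r| * c)) : ℂ) * Complex.exp (Complex.I * r * t)
      = ((2 * c / (c ^ 2 + t ^ 2) : ℝ) : ℂ) := by
  have e1 : Set.EqOn (fun r : ℝ => (Real.exp (-(|r| * c)) : ℂ) * Complex.exp (Complex.I * r * t))
      (fun r : ℝ => Complex.exp ((c + Complex.I * t) * r)) (Set.Iic 0) := by
    intro r hr
    simp only
    rw [abs_of_nonpos hr]
    push_cast
    rw [← Complex.exp_add]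
    congr 1; ring
  have e2 : Set.EqOn (fun r : ℝ => (Real.exp (-(|r| * c)) : ℂ) * Complex.exp (Complex.I * r * t))
      (fun r : ℝ => Complex.exp ((-c + Complex.I * t) * r)) (Set.Ioi 0) := by
    intro r hr
    simp only
    rw [abs_of_pos hr]
    push_cast
    rw [← Complex.exp_add]
    congr 1; ring
  have h1 : 0 < ((c : ℂ) + Complex.I * t).re := by simpa
  have h2 : (-(c : ℂ) + Complex.I * t).re < 0 := by simpa
  have i1 := (integrableOn_exp_mul_complex_Iic h1 0).congr_fun e1.symm measurableSet_Iic
  have i2 := (integrableOn_exp_mul_complex_Ioi h2 0).congr_fun e2.symm measurableSet_Ioi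
  constructor
  · rw [← integrableOn_univ, ← Set.Iic_union_Ioi (a := (0:ℝ))]
    exact i1.union i2
  · rw [← intervalIntegral.integral_Iic_add_Ioi i1 i2, setIntegral_congr_fun measurableSet_Iic e1,
      setIntegral_congr_fun measurableSet_Ioi e2, integral_exp_mul_complex_Iic h1,
      integral_exp_mul_complex_Ioi h2]
    have n1 : (c : ℂ) + Complex.I * t ≠ 0 := fun h => by simp [h] at h1
    have n2 : -(c : ℂ) + Complex.I * t ≠ 0 := fun h => by simp [h] at h2
    have n3 : (c : ℂ) ^ 2 + t ^ 2 ≠ 0 := by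
      have : c ^ 2 + t ^ 2 ≠ 0 := by positivity
      exact_mod_cast this
    push_cast
    simp only [mul_zero, Complex.exp_zero]
    field_simp
    ring_nf
    simp only [Complex.I_sq]
    ring

lemma aux_abs (c : ℝ) (hc : 0 < c) : ∫ r : ℝ, Real.exp (-(|r| * c)) = 2 / c := by
  rw [integral_comp_abs (f := fun r => Real.exp (-(r * c)))]
  have := integral_exp_mul_Ioi (a := -c) (by linarith) 0
  simp only [mul_comm _ c, ← neg_mul, this]
  simp [div_eq_mul_inv]

open Filter Set Topology in
lemma aux_log (θ t : ℝ) (hθ : 0 < θ) (ht : t ≠ 0) :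
    ∫ u in Set.Ioi (1:ℝ), 2 * (u / θ) / ((u / θ) ^ 2 + t ^ 2) / u ^ 2
      = Real.log (1 + θ ^ 2 * t ^ 2) / (θ * t ^ 2) := by
  have hd : ∀ u ∈ Ici (1:ℝ), HasDerivAt
      (fun u : ℝ => -(Real.log (1 + θ ^ 2 * t ^ 2 * (u ^ 2)⁻¹) / (θ * t ^ 2)))
      (2 * (u / θ) / ((u / θ) ^ 2 + t ^ 2) / u ^ 2) u := by
    intro u hu
    have hu : 1 ≤ u := hu
    have hu0 : 0 < u := by positivity
    have h1 : HasDerivAt (fun u : ℝ => 1 + θ ^ 2 * t ^ 2 * (u ^ 2)⁻¹)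
      (θ ^ 2 * t ^ 2 * (-(2 * u) / (u ^ 2) ^ 2)) u := by
      have := ((hasDerivAt_pow 2 u).fun_inv (by positivity)).const_mul (θ ^ 2 * t ^ 2)
      refine (this.const_add 1).congr_deriv ?_
      norm_num
    have hp : 1 + θ ^ 2 * t ^ 2 * (u ^ 2)⁻¹ ≠ 0 := by positivity
    refine ((h1.log hp).div_const (θ * t ^ 2)).fun_neg.congr_deriv ?_
    have : u ^ 2 + θ ^ 2 * t ^ 2 ≠ 0 := by positivity
    have : (u/θ) ^ 2 + t ^ 2 ≠ 0 := by positivity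
    field_simp
    try ring
  have hl : Tendsto (fun u : ℝ => -(Real.log (1 + θ ^ 2 * t ^ 2 * (u ^ 2)⁻¹) / (θ * t ^ 2)))
      atTop (𝓝 0) := by
    have h0 : Tendsto (fun u : ℝ => (u ^ 2)⁻¹) atTop (𝓝 0) :=
      tendsto_inv_atTop_zero.comp (tendsto_pow_atTop two_ne_zero)
    have h1 : Tendsto (fun u : ℝ => 1 + θ ^ 2 * t ^ 2 * (u ^ 2)⁻¹) atTop (𝓝 1) := by
      simpa using (h0.const_mul (θ ^ 2 * t ^ 2)).const_add 1
    have := ((h1.log one_ne_zero).div_const (θ * t ^ 2)).neg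
    simpa using this
  have hi := integrableOn_Ioi_deriv_of_nonneg' hd (by
    intro u hu
    have hu : 1 < u := hu
    positivity) hl
  rw [integral_Ioi_of_hasDerivAt_of_tendsto' hd hi hl]
  simp

lemma aux_prod (θ t : ℝ) (hθ : 0 < θ) :
    Integrable (Function.uncurry fun (r u : ℝ) =>
      (Real.exp (-(|r| * (u / θ))) : ℂ) * Complex.exp (Complex.I * r * t) / (u : ℂ) ^ 2)
      (volume.prod (volume.restrict (Set.Ioi 1))) := by
  rw [integrable_prod_iff']
  · constructor
    · filter_upwards [ae_restrict_mem measurableSet_Ioi] with u hu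
      have hu : 1 < u := hu
      have hc : 0 < u / θ := by positivity
      have := (aux_int (u / θ) t hc).1.div_const ((u : ℂ) ^ 2)
      simp only [Function.uncurry]
      exact this
    · have h : IntegrableOn (fun u : ℝ => (2 * θ) * u ^ (-3 : ℝ)) (Set.Ioi 1) :=
        (integrableOn_Ioi_rpow_of_lt (by norm_num) one_pos).const_mul _
      refine h.congr_fun ?_ measurableSet_Ioi
      intro u hu
      have hu : 1 < u := hu
      have hu0 : 0 < u := by positivity
      have hn : ∀ r : ℝ, ‖(Real.exp (-(|r| * (u / θ))) : ℂ) * Complex.exp (Complex.I * r * t)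
          / (u : ℂ) ^ 2‖ = Real.exp (-(|r| * (u / θ))) / u ^ 2 := by
        intro r
        have : Complex.I * r * t = ((r * t : ℝ) : ℂ) * Complex.I := by push_cast; ring
        rw [norm_div, norm_mul, this, Complex.norm_exp_ofReal_mul_I, Complex.norm_real,
          norm_pow, Complex.norm_real, Real.norm_of_nonneg (Real.exp_pos _).le,
          Real.norm_of_nonneg hu0.le, mul_one]
      simp only [Function.uncurry]
      simp_rw [hn]
      rw [integral_div, aux_abs _ (by positivity), Real.rpow_neg hu0.le]
      norm_cast
      field_simp
  · apply Measurable.aestronglyMeasurable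
    unfold Function.uncurry
    fun_prop

/-- Equation (12): the Fourier transform of the Polya kernel constructed from the
exponential distribution with scale `θ`, namely
`k(r) = e^{-|r|/θ} - (|r|/θ) E₁(|r|/θ)` (with `k 0 = 1`), is
`log(1 + θ²t²)/(θ t²)` for `t ≠ 0`. -/
theorem polya_kernel_exponential_fourier (θ : ℝ) (hθ : 0 < θ)
    (k : ℝ → ℝ) (hk0 : k 0 = 1)
    (hk : ∀ r : ℝ, r ≠ 0 →
      k r = Real.exp (-(|r| / θ)) - (|r| / θ) * expIntegralE1 (|r| / θ))
    (t : ℝ) (ht : t ≠ 0) :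
    ∫ r : ℝ, (k r : ℂ) * Complex.exp (Complex.I * r * t)
      = ((Real.log (1 + θ ^ 2 * t ^ 2) / (θ * t ^ 2) : ℝ) : ℂ) := by
  have h1 : ∫ r : ℝ, (k r : ℂ) * Complex.exp (Complex.I * r * t) =
      ∫ r : ℝ, ∫ u in Set.Ioi (1:ℝ), (Real.exp (-(|r| * (u / θ))) : ℂ)
        * Complex.exp (Complex.I * r * t) / (u : ℂ) ^ 2 := by
    apply integral_congr_ae
    have h0 : ∀ᵐ r : ℝ, r ≠ 0 := by simp [ae_iff]
    filter_upwards [h0] with r hr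
    rw [hk r hr, aux_E2 _ (by positivity), ← integral_complex_ofReal, ← integral_mul_const]
    congr 1
    ext u
    have : |r| / θ * u = |r| * (u / θ) := by ring
    rw [this]
    push_cast
    ring
  rw [h1, integral_integral_swap (aux_prod θ t hθ), ← aux_log θ t hθ ht,
    ← integral_complex_ofReal]
  apply setIntegral_congr_fun measurableSet_Ioi
  intro u hu
  have hu : 1 < u := hu
  simp only
  rw [integral_div, (aux_int (u / θ) t (by positivity)).2]
  push_cast
  rfl
end

section
/- For every σ > 0 and r ≥ 0: ∫₀^∞ max{0, 1 − r/x} · (√2/(σ√π)) e^{−x²/(2σ²)} dx = erfc(r/(σ√2)) − (1/√π) · (r/(σ√2)) · E₁(r²/(2σ²)) for r > 0, and equals 1 for r = 0, where erfc(x) = (2/√π) ∫_x^∞ e^{−t²} dt is the complementary error function and E₁(z) = ∫_z^∞ e^{−u}/u du is the exponential integral. -/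
open MeasureTheory Real

/-- The complementary error function `erfc(x) = (2/√π) ∫_x^∞ e^{-t²} dt`. -/
noncomputable def erfc (x : ℝ) : ℝ :=
  (2 / Real.sqrt π) * ∫ t in Set.Ioi x, Real.exp (-t ^ 2)

lemma gauss_int (a : ℝ) : IntegrableOn (fun t : ℝ => Real.exp (-t ^ 2)) (Set.Ioi a) := by
  have h := integrable_exp_neg_mul_sq (b := 1) one_pos
  simpa using h.integrableOn (s := Set.Ioi a)

lemma E1_sq (a : ℝ) (ha : 0 < a) :
    expIntegralE1 (a ^ 2) = 2 * ∫ t in Set.Ioi a, Real.exp (-t ^ 2) / t := by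
  unfold expIntegralE1
  rw [← integral_comp_rpow_Ioi_of_pos' (g := fun u => Real.exp (-u) / u) (p := 2)
    two_pos (sq_nonneg a), ← integral_const_mul]
  have h1 : (a ^ 2) ^ ((2 : ℝ)⁻¹) = a := by
    rw [← Real.rpow_natCast, ← Real.rpow_mul ha.le]; norm_num
  rw [h1]
  apply setIntegral_congr_fun measurableSet_Ioi
  intro t ht
  have ht0 : 0 < t := ha.trans ht
  have h2 : t ^ (2 : ℝ) = t ^ 2 := by norm_num
  have h3 : t ^ ((2 : ℝ) - 1) = t := by norm_num
  simp only [h2, h3, smul_eq_mul]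
  field_simp

lemma gauss_div_int (a : ℝ) (ha : 0 < a) :
    IntegrableOn (fun t : ℝ => Real.exp (-t ^ 2) / t) (Set.Ioi a) := by
  refine Integrable.mono' ((gauss_int a).const_mul a⁻¹) ?_ ?_
  · apply Measurable.aestronglyMeasurable
    fun_prop
  · refine (ae_restrict_iff' measurableSet_Ioi).2 (Filter.Eventually.of_forall ?_)
    intro t ht
    have ht' : a < t := ht
    have ht0 : 0 < t := ha.trans ht'
    rw [Real.norm_of_nonneg (by positivity), div_eq_inv_mul]
    gcongr

lemma core (a : ℝ) (ha : 0 < a) :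
    ∫ t in Set.Ioi (0 : ℝ), max 0 (1 - a / t) * Real.exp (-t ^ 2)
      = (∫ t in Set.Ioi a, Real.exp (-t ^ 2)) - a / 2 * expIntegralE1 (a ^ 2) := by
  rw [E1_sq a ha, setIntegral_eq_of_subset_of_forall_diff_eq_zero measurableSet_Ioi
    (Set.Ioi_subset_Ioi ha.le)]
  · rw [show a / 2 * (2 * ∫ t in Set.Ioi a, Real.exp (-t ^ 2) / t)
      = a * ∫ t in Set.Ioi a, Real.exp (-t ^ 2) / t by ring, ← integral_const_mul,
      ← integral_sub (gauss_int a) ((gauss_div_int a ha).const_mul a)]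
    apply setIntegral_congr_fun measurableSet_Ioi
    intro t ht
    have ht' : a < t := ht
    have ht0 : 0 < t := ha.trans ht'
    have : 0 ≤ 1 - a / t := by
      rw [sub_nonneg, div_le_one ht0]; exact ht'.le
    simp only [max_eq_right this]
    ring
  · rintro t ⟨h0, h1⟩
    have h0' : 0 < t := h0
    have h1' : t ≤ a := not_lt.1 h1
    have : 1 - a / t ≤ 0 := by
      rw [sub_nonpos, le_div_iff₀ h0']; linarith
    rw [max_eq_left this, zero_mul]

lemma scale (σ : ℝ) (hσ : 0 < σ) (r : ℝ) :
    ∫ x in Set.Ioi (0 : ℝ),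
          max 0 (1 - r / x) * (Real.sqrt 2 / (σ * Real.sqrt π)
            * Real.exp (-(x ^ 2 / (2 * σ ^ 2))))
      = 2 / Real.sqrt π * ∫ t in Set.Ioi (0 : ℝ),
          max 0 (1 - (r / (σ * Real.sqrt 2)) / t) * Real.exp (-t ^ 2) := by
  have h2 : 0 < Real.sqrt 2 := by positivity
  have hpi : 0 < Real.sqrt π := by positivity
  have hs : 0 < σ * Real.sqrt 2 := by positivity
  have hsq : Real.sqrt 2 ^ 2 = 2 := Real.sq_sqrt (by norm_num)
  have h := integral_comp_mul_left_Ioi' (fun t : ℝ =>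
    max 0 (1 - (r / (σ * Real.sqrt 2)) / t) * Real.exp (-t ^ 2)) 0 (inv_pos.2 hs)
  rw [mul_zero] at h
  rw [← h, smul_eq_mul, ← mul_assoc, ← integral_const_mul]
  apply setIntegral_congr_fun measurableSet_Ioi
  intro x hx
  have hx0 : 0 < x := hx
  have e1 : r / (σ * Real.sqrt 2) / ((σ * Real.sqrt 2)⁻¹ * x) = r / x := by
    field_simp
  have e2 : ((σ * Real.sqrt 2)⁻¹ * x) ^ 2 = x ^ 2 / (2 * σ ^ 2) := by
    rw [mul_pow, inv_pow, mul_pow, hsq]; field_simp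
  have e3 : 2 / Real.sqrt π * (σ * Real.sqrt 2)⁻¹ = Real.sqrt 2 / (σ * Real.sqrt π) := by
    field_simp
    rw [hsq]
  simp only [e1, e2, e3]
  ring

/-- Equation (16): the Polya kernel constructed from the half-normal distribution
`HN(σ)` equals `erfc(r/(σ√2)) - (1/√π)(r/(σ√2)) E₁(r²/(2σ²))` for `r > 0`, and `1`
for `r = 0`. -/
theorem polya_kernel_half_normal (σ : ℝ) (hσ : 0 < σ) (r : ℝ) (hr : 0 ≤ r) :
    (0 < r →
      ∫ x in Set.Ioi (0 : ℝ),
          max 0 (1 - r / x) * (Real.sqrt 2 / (σ * Real.sqrt π)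
            * Real.exp (-(x ^ 2 / (2 * σ ^ 2))))
        = erfc (r / (σ * Real.sqrt 2))
          - (1 / Real.sqrt π) * (r / (σ * Real.sqrt 2))
            * expIntegralE1 (r ^ 2 / (2 * σ ^ 2))) ∧
    (r = 0 →
      ∫ x in Set.Ioi (0 : ℝ),
          max 0 (1 - r / x) * (Real.sqrt 2 / (σ * Real.sqrt π)
            * Real.exp (-(x ^ 2 / (2 * σ ^ 2))))
        = 1) := by
  have hpi : 0 < Real.sqrt π := by positivity
  have hsq : Real.sqrt 2 ^ 2 = 2 := Real.sq_sqrt (by norm_num)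
  refine ⟨fun h => ?_, fun h => ?_⟩
  · have ha : 0 < r / (σ * Real.sqrt 2) := by positivity
    rw [scale σ hσ r, core _ ha]
    have e : (r / (σ * Real.sqrt 2)) ^ 2 = r ^ 2 / (2 * σ ^ 2) := by
      rw [div_pow, mul_pow, hsq, mul_comm]
    rw [e]
    unfold erfc
    ring
  · rw [scale σ hσ r, h]
    have := integral_gaussian_Ioi 1
    simp only [neg_mul, one_mul, div_one] at this
    simp only [zero_div, sub_zero, max_eq_right zero_le_one, one_mul, this]
    field_simp
end

section
/- For σ > 0, define k : ℝ → ℝ by k(r) = erfc(|r|/(σ√2)) − (1/√π)(|r|/(σ√2)) E₁(r²/(2σ²)) for r ≠ 0 and k(0) = 1, where erfc(x) = (2/√π) ∫_x^∞ e^{−t²} dt and E₁(z) = ∫_z^∞ e^{−u}/u du. Then for every t > 0: ∫_ℝ k(r) e^{i r t} dr = (2/(t√π)) ∫₀^∞ E₁(r²) sin(σ√2 · t · r) dr. -/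
open MeasureTheory Real

lemma aux_hasDerivAt_tail {f : ℝ → ℝ} {a x : ℝ} (hax : a < x)
    (hf : IntegrableOn f (Set.Ioi a)) (hc : ContinuousOn f (Set.Ioi a)) :
    HasDerivAt (fun y => ∫ u in Set.Ioi y, f u) (-(f x)) x := by
  have hint : IntervalIntegrable f volume a x :=
    (intervalIntegrable_iff_integrableOn_Ioc_of_le hax.le).2
      (hf.mono_set Set.Ioc_subset_Ioi_self)
  have h1 : HasDerivAt (fun u => ∫ y in a..u, f y) (f x) x :=
    intervalIntegral.integral_hasDerivAt_right hint
      (hc.stronglyMeasurableAtFilter isOpen_Ioi x hax)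
      (hc.continuousAt (Ioi_mem_nhds hax))
  have h2 := h1.const_sub (∫ u in Set.Ioi a, f u)
  refine h2.congr_of_eventuallyEq ?_
  filter_upwards [Ioi_mem_nhds hax] with y hy
  rw [← intervalIntegral.integral_Ioi_sub_Ioi hf (le_of_lt hy)]
  ring

lemma aux_pt {x u : ℝ} (hx : 0 < x) (hu : x ^ 2 < u) :
    Real.exp (-u) / u ≤ (x ^ (-(1/2) : ℝ) * Real.exp (-(1/2) * x ^ 2)) *
      (u ^ (-(3/4) : ℝ) * Real.exp (-(1/2) * u ^ (1:ℝ))) := by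
  have hu0 : 0 < u := lt_trans (by positivity) hu
  have e1 : Real.exp (-u) = Real.exp (-(1/2) * u) * Real.exp (-(1/2) * u) := by
    rw [← Real.exp_add]; ring_nf
  have e2 : u⁻¹ = u ^ (-(1/4) : ℝ) * u ^ (-(3/4) : ℝ) := by
    rw [← Real.rpow_add hu0, ← Real.rpow_neg_one]; norm_num
  have e3 : x ^ (-(1/2) : ℝ) = (x ^ 2) ^ (-(1/4) : ℝ) := by
    rw [← Real.rpow_natCast, ← Real.rpow_mul hx.le]; norm_num
  have h1 : u ^ (-(1/4) : ℝ) ≤ x ^ (-(1/2) : ℝ) := by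
    rw [e3]
    exact Real.rpow_le_rpow_of_nonpos (by positivity) hu.le (by norm_num)
  have h2 : Real.exp (-(1/2) * u) ≤ Real.exp (-(1/2) * x ^ 2) :=
    Real.exp_le_exp.2 (by linarith)
  rw [div_eq_mul_inv, e1, e2, Real.rpow_one]
  calc _ = (u ^ (-(1/4) : ℝ) * Real.exp (-(1/2) * u)) *
        (u ^ (-(3/4) : ℝ) * Real.exp (-(1/2) * u)) := by ring
    _ ≤ _ := by gcongr

lemma aux_int34 : IntegrableOn (fun u : ℝ => u ^ (-(3/4) : ℝ) * Real.exp (-(1/2) * u ^ (1:ℝ)))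
    (Set.Ioi 0) :=
  integrableOn_rpow_mul_exp_neg_mul_rpow (by norm_num) one_pos (by norm_num)

lemma aux_contE : ContinuousOn (fun u : ℝ => Real.exp (-u) / u) (Set.Ioi 0) := by
  apply ContinuousOn.div (by fun_prop) (by fun_prop)
  intro x hx
  exact ne_of_gt hx

lemma aux_intE {z : ℝ} (hz : 0 < z) :
    IntegrableOn (fun u : ℝ => Real.exp (-u) / u) (Set.Ioi z) := by
  have hs : Set.Ioi z ⊆ Set.Ioi 0 := Set.Ioi_subset_Ioi hz.le
  have hx : 0 < √z := Real.sqrt_pos.2 hz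
  refine Integrable.mono' ((aux_int34.mono_set hs).const_mul
    ((√z) ^ (-(1/2) : ℝ) * Real.exp (-(1/2) * (√z) ^ 2)))
    ((aux_contE.mono hs).aestronglyMeasurable measurableSet_Ioi) ?_
  filter_upwards [ae_restrict_mem measurableSet_Ioi] with u hu
  have hu0 : 0 < u := hs hu
  rw [Real.norm_of_nonneg (by positivity)]
  exact aux_pt hx (by rwa [Real.sq_sqrt hz.le])

lemma aux_E_bound : ∃ C : ℝ, 0 ≤ C ∧ ∀ x : ℝ, 0 < x → 
    |expIntegralE1 (x ^ 2)| ≤ C * (x ^ (-(1/2) : ℝ) * Real.exp (-(1/2) * x ^ 2)) := by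
  refine ⟨∫ u in Set.Ioi (0:ℝ), u ^ (-(3/4) : ℝ) * Real.exp (-(1/2) * u ^ (1:ℝ)), ?_, ?_⟩
  · refine setIntegral_nonneg measurableSet_Ioi fun u hu => ?_
    have hu0 : 0 < u := hu
    positivity
  · intro x hx
    have hz : 0 < x ^ 2 := by positivity
    have hs : Set.Ioi (x ^ 2) ⊆ Set.Ioi 0 := Set.Ioi_subset_Ioi hz.le
    unfold expIntegralE1
    rw [abs_of_nonneg (setIntegral_nonneg measurableSet_Ioi fun u hu => by
      have hu0 : 0 < u := hs hu
      positivity)]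
    calc _ ≤ ∫ u in Set.Ioi (x ^ 2), (x ^ (-(1/2) : ℝ) * Real.exp (-(1/2) * x ^ 2)) *
          (u ^ (-(3/4) : ℝ) * Real.exp (-(1/2) * u ^ (1:ℝ))) :=
        setIntegral_mono_on (aux_intE hz) ((aux_int34.mono_set hs).const_mul _)
          measurableSet_Ioi fun u hu => aux_pt hx hu
      _ = (∫ u in Set.Ioi (x ^ 2), u ^ (-(3/4) : ℝ) * Real.exp (-(1/2) * u ^ (1:ℝ))) *
          (x ^ (-(1/2) : ℝ) * Real.exp (-(1/2) * x ^ 2)) := by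
        rw [integral_const_mul, mul_comm]
      _ ≤ _ := by
        refine mul_le_mul_of_nonneg_right ?_ (by positivity)
        refine setIntegral_mono_set aux_int34 ?_ hs.eventuallyLE
        filter_upwards [ae_restrict_mem measurableSet_Ioi] with u hu
        have hu0 : 0 < u := hu
        simp only [Pi.zero_apply]
        positivity

lemma aux_intG : Integrable (fun t : ℝ => Real.exp (-t ^ 2)) := by
  simpa using integrable_exp_neg_mul_sq (b := 1) one_pos

lemma aux_intG2 : Integrable (fun t : ℝ => Real.exp (-(1/2) * t ^ 2)) :=
  integrable_exp_neg_mul_sq (by norm_num)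

lemma aux_erfc_bound : ∃ C : ℝ, 0 ≤ C ∧ ∀ x : ℝ, 0 < x →
    |erfc x| ≤ C * Real.exp (-(1/2) * x ^ 2) := by
  refine ⟨(2 / √π) * ∫ u : ℝ, Real.exp (-(1/2) * u ^ 2), ?_, ?_⟩
  · have : 0 ≤ ∫ u : ℝ, Real.exp (-(1/2) * u ^ 2) := integral_nonneg fun u => by positivity
    positivity
  · intro x hx
    have h0 : 0 ≤ ∫ t in Set.Ioi x, Real.exp (-t ^ 2) :=
      setIntegral_nonneg measurableSet_Ioi fun u hu => by positivity
    unfold erfc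
    rw [abs_of_nonneg (by positivity), mul_assoc]
    refine mul_le_mul_of_nonneg_left ?_ (by positivity)
    calc _ ≤ ∫ u in Set.Ioi x, Real.exp (-(1/2) * u ^ 2) * Real.exp (-(1/2) * x ^ 2) := by
          refine setIntegral_mono_on aux_intG.integrableOn
            (aux_intG2.integrableOn.mul_const _) measurableSet_Ioi fun u hu => ?_
          rw [← Real.exp_add]
          have hu' : x < u := hu
          apply Real.exp_le_exp.2
          nlinarith
      _ = (∫ u in Set.Ioi x, Real.exp (-(1/2) * u ^ 2)) * Real.exp (-(1/2) * x ^ 2) := by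
          rw [integral_mul_const]
      _ ≤ _ := by
          refine mul_le_mul_of_nonneg_right ?_ (by positivity)
          exact setIntegral_le_integral aux_intG2 (Filter.Eventually.of_forall fun u => by positivity)

noncomputable def auxg (x : ℝ) : ℝ :=
  erfc x - (1 / √π) * x * expIntegralE1 (x ^ 2)

lemma aux_derivE {x : ℝ} (hx : 0 < x) :
    HasDerivAt (fun y => expIntegralE1 (y ^ 2)) (-(Real.exp (-x^2) / x^2) * (2 * x)) x := by
  have hz : 0 < x ^ 2 := by positivity
  have h := aux_hasDerivAt_tail (f := fun u : ℝ => Real.exp (-u) / u) (a := x ^ 2 / 2)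
    (x := x ^ 2) (by linarith) (aux_intE (by positivity))
    (aux_contE.mono (Set.Ioi_subset_Ioi (by positivity)))
  have h2 : HasDerivAt (fun y : ℝ => y ^ 2) (2 * x) x := by simpa using hasDerivAt_pow 2 x
  exact HasDerivAt.comp (h₂ := expIntegralE1) (h := fun y : ℝ => y ^ 2) x h h2

lemma aux_deriv {x : ℝ} (hx : 0 < x) :
    HasDerivAt auxg (-(1 / √π) * expIntegralE1 (x ^ 2)) x := by
  have h1 : HasDerivAt erfc ((2 / √π) * -(Real.exp (-x ^ 2))) x :=
    (aux_hasDerivAt_tail (f := fun t : ℝ => Real.exp (-t ^ 2)) (a := 0) hx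
      aux_intG.integrableOn (by fun_prop)).const_mul _
  have h2 := ((hasDerivAt_id x).const_mul (1 / √π)).mul (aux_derivE hx)
  have h3 := h1.sub h2
  have h4 : HasDerivAt auxg _ x := h3
  refine h4.congr_deriv ?_
  simp only [id]
  field_simp
  ring

lemma aux_g_bound : ∃ A B : ℝ, ∀ x : ℝ, 0 < x →
    |auxg x| ≤ A * Real.exp (-(1/2) * x ^ 2) + B * (x ^ (1/2 : ℝ) * Real.exp (-(1/2) * x ^ 2)) := by
  obtain ⟨C, hC, hE⟩ := aux_E_bound
  obtain ⟨D, hD, he⟩ := aux_erfc_bound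
  refine ⟨D, (1 / √π) * C, fun x hx => ?_⟩
  unfold auxg
  refine (abs_sub _ _).trans (add_le_add (he x hx) ?_)
  rw [abs_mul, abs_of_nonneg (show 0 ≤ 1 / √π * x by positivity)]
  have e : x ^ (1/2 : ℝ) = x * x ^ (-(1/2) : ℝ) := by
    rw [← Real.rpow_one_add' hx.le (by norm_num)]; norm_num
  rw [e]
  calc _ ≤ 1 / √π * x * (C * (x ^ (-(1/2) : ℝ) * Real.exp (-(1/2) * x ^ 2))) := by
        gcongr; exact hE x hx
    _ = _ := by ring

lemma aux_int_E2 : IntegrableOn (fun x => expIntegralE1 (x ^ 2)) (Set.Ioi 0) := by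
  obtain ⟨C, hC, hE⟩ := aux_E_bound
  refine Integrable.mono' ((integrableOn_rpow_mul_exp_neg_mul_sq (b := 1/2) (s := -(1/2))
    (by norm_num) (by norm_num)).const_mul C) ?_ ?_
  · refine ContinuousOn.aestronglyMeasurable (fun x hx => ?_) measurableSet_Ioi
    exact (aux_derivE hx).continuousAt.continuousWithinAt
  · filter_upwards [ae_restrict_mem measurableSet_Ioi] with u hu
    exact hE u hu

lemma aux_int_g : IntegrableOn auxg (Set.Ioi 0) := by
  obtain ⟨A, B, h⟩ := aux_g_bound
  refine Integrable.mono' ((aux_intG2.integrableOn.const_mul A).add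
    ((integrableOn_rpow_mul_exp_neg_mul_sq (b := 1/2) (s := 1/2)
    (by norm_num) (by norm_num)).const_mul B)) ?_ ?_
  · refine ContinuousOn.aestronglyMeasurable (fun x hx => ?_) measurableSet_Ioi
    exact (aux_deriv hx).continuousAt.continuousWithinAt
  · filter_upwards [ae_restrict_mem measurableSet_Ioi] with u hu
    exact h u hu

open Filter Topology in
lemma aux_lim_exp (s : ℝ) : Tendsto (fun x : ℝ => x ^ s * Real.exp (-(1/2) * x ^ 2)) atTop (𝓝 0) := by
  refine (rpow_mul_exp_neg_mul_sq_isLittleO_exp_neg (b := 1/2) (by norm_num) s).trans_tendsto ?_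
  refine Real.tendsto_exp_atBot.comp ?_
  exact tendsto_id.const_mul_atTop_of_neg (by norm_num)

open Filter Topology in
lemma aux_parts {w : ℝ} (hw : 0 < w) :
    ∫ x in Set.Ioi (0:ℝ), auxg x * Real.cos (w * x) =
      (1 / (w * √π)) * ∫ x in Set.Ioi (0:ℝ), expIntegralE1 (x ^ 2) * Real.sin (w * x) := by
  obtain ⟨A, B, hb⟩ := aux_g_bound
  have hv : ∀ x ∈ Set.Ioi (0:ℝ), HasDerivAt (fun x => Real.sin (w * x) / w) (Real.cos (w * x)) x := by
    intro x _
    have := (((hasDerivAt_id x).const_mul w).sin).div_const w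
    refine HasDerivAt.congr_deriv this ?_
    simp only [id]
    field_simp
  have key := integral_Ioi_mul_deriv_eq_deriv_mul (a := 0) (a' := 0) (b' := 0)
    (u := auxg) (u' := fun x => -(1 / √π) * expIntegralE1 (x ^ 2))
    (v := fun x => Real.sin (w * x) / w) (v' := fun x => Real.cos (w * x))
    (fun x hx => aux_deriv hx) hv ?_ ?_ ?_ ?_
  · rw [key, sub_zero, zero_sub, ← integral_neg, ← integral_const_mul]
    congr 1
    ext x
    field_simp
  · refine Integrable.mul_bdd (c := 1) aux_int_g (by fun_prop) ?_
    exact Eventually.of_forall fun x => Real.abs_cos_le_one _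
  · refine Integrable.mul_bdd (c := 1 / w) (aux_int_E2.const_mul _) (by fun_prop) ?_
    refine Eventually.of_forall fun x => ?_
    rw [Real.norm_eq_abs, abs_div, abs_of_pos hw]
    gcongr
    exact Real.abs_sin_le_one _
  · have hv0 : Tendsto (fun x => Real.sin (w * x) / w) (𝓝[>] 0) (𝓝 0) := by
      have : Continuous (fun x => Real.sin (w * x) / w) := by fun_prop
      simpa using (this.tendsto 0).mono_left nhdsWithin_le_nhds
    refine bdd_le_mul_tendsto_zero' (|A| + |B|) ?_ hv0
    have : Set.Ioo (0:ℝ) 1 ∈ 𝓝[>] (0:ℝ) := Ioo_mem_nhdsGT one_pos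
    filter_upwards [this] with x hx
    refine (hb x hx.1).trans ?_
    have e1 : Real.exp (-(1/2) * x ^ 2) ≤ 1 := Real.exp_le_one_iff.2 (by nlinarith [sq_nonneg x])
    have e2 : x ^ (1/2 : ℝ) ≤ 1 := Real.rpow_le_one hx.1.le hx.2.le (by norm_num)
    have e3 : 0 ≤ x ^ (1/2 : ℝ) := Real.rpow_nonneg hx.1.le _
    refine add_le_add ?_ ?_
    · calc _ ≤ |A| * Real.exp (-(1/2) * x ^ 2) := by gcongr; exact le_abs_self A
        _ ≤ |A| * 1 := by gcongr
        _ = _ := mul_one _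
    · calc _ ≤ |B| * (x ^ (1/2 : ℝ) * Real.exp (-(1/2) * x ^ 2)) := by gcongr; exact le_abs_self B
        _ ≤ |B| * (1 * 1) := by gcongr
        _ = _ := by ring
  · have hg : Tendsto auxg atTop (𝓝 0) := by
      have hl : Tendsto (fun x : ℝ => A * Real.exp (-(1/2) * x ^ 2) +
          B * (x ^ (1/2 : ℝ) * Real.exp (-(1/2) * x ^ 2))) atTop (𝓝 0) := by
        have := ((aux_lim_exp 0).const_mul A).add ((aux_lim_exp (1/2)).const_mul B)
        simpa only [Real.rpow_zero, one_mul, mul_zero, add_zero] using this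
      refine squeeze_zero_norm' ?_ hl
      filter_upwards [eventually_gt_atTop 0] with x hx
      exact hb x hx
    refine Tendsto.congr (fun x => mul_comm _ _) (bdd_le_mul_tendsto_zero' (1 / w)
      (f := fun x => Real.sin (w * x) / w) ?_ hg)
    refine Eventually.of_forall fun x => ?_
    rw [abs_div, abs_of_pos hw]
    gcongr
    exact Real.abs_sin_le_one _

lemma aux_integrable_abs {f : ℝ → ℝ} (hf : IntegrableOn f (Set.Ioi 0)) :
    Integrable (fun x => f |x|) := by
  have hf : IntegrableOn (fun x => f |x|) (Set.Ioi 0) := by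
    refine hf.congr_fun (fun x hx => ?_) measurableSet_Ioi
    rw [abs_of_pos hx]
  have int_Iic : IntegrableOn (fun x ↦ f |x|) (Set.Iic 0) := by
    rw [← Measure.map_neg_eq_self (volume : Measure ℝ)]
    let m : MeasurableEmbedding fun x : ℝ => -x := (Homeomorph.neg ℝ).measurableEmbedding
    rw [m.integrableOn_map_iff]
    simp_rw [Function.comp_def, abs_neg, Set.neg_preimage, Set.neg_Iic, neg_zero]
    exact Iff.mpr integrableOn_Ici_iff_integrableOn_Ioi hf
  rw [← integrableOn_univ, ← Set.Iic_union_Ioi (a := (0:ℝ))]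
  exact int_Iic.union hf

/-- Equation (17): the Fourier transform of the Polya kernel constructed from the
half-normal distribution `HN(σ)`, namely
`k(r) = erfc(|r|/(σ√2)) - (1/√π)(|r|/(σ√2)) E₁(r²/(2σ²))` (with `k 0 = 1`), equals
`(2/(t√π)) ∫₀^∞ E₁(r²) sin(σ√2 t r) dr` for `t > 0`. -/
theorem polya_kernel_half_normal_fourier (σ : ℝ) (hσ : 0 < σ)
    (k : ℝ → ℝ) (hk0 : k 0 = 1)
    (hk : ∀ r : ℝ, r ≠ 0 →
      k r = erfc (|r| / (σ * Real.sqrt 2))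
        - (1 / Real.sqrt π) * (|r| / (σ * Real.sqrt 2))
          * expIntegralE1 (r ^ 2 / (2 * σ ^ 2)))
    (t : ℝ) (ht : 0 < t) :
    ∫ r : ℝ, (k r : ℂ) * Complex.exp (Complex.I * r * t)
      = (((2 / (t * Real.sqrt π)) *
          ∫ r in Set.Ioi (0 : ℝ),
            expIntegralE1 (r ^ 2) * Real.sin (σ * Real.sqrt 2 * t * r) : ℝ) : ℂ) := by
  have hs : 0 < σ * √2 := by positivity
  set s := σ * √2 with hs_def
  have hs2 : s ^ 2 = 2 * σ ^ 2 := by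
    rw [hs_def, mul_pow, Real.sq_sqrt (by norm_num)]; ring
  have hkg : ∀ r : ℝ, r ≠ 0 → k r = auxg (s⁻¹ * |r|) := by
    intro r hr
    have e : (s⁻¹ * |r|) ^ 2 = r ^ 2 / (2 * σ ^ 2) := by
      rw [← hs2, mul_pow s⁻¹ |r|, sq_abs, inv_pow, div_eq_inv_mul]
    rw [hk r hr, auxg, e, div_eq_inv_mul |r| s]
  have hae : ∀ᵐ r : ℝ, k r = auxg (s⁻¹ * |r|) := by
    filter_upwards [Measure.ae_ne volume (0:ℝ)] with r hr using hkg r hr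
  have hGint : IntegrableOn (fun r => auxg (s⁻¹ * r)) (Set.Ioi 0) := by
    rw [integrableOn_Ioi_comp_mul_left_iff _ _ (inv_pos.2 hs), mul_zero]
    exact aux_int_g
  have hG : Integrable (fun r : ℝ => auxg (s⁻¹ * |r|)) :=
    aux_integrable_abs (f := fun r => auxg (s⁻¹ * r)) hGint
  have hcos : Integrable (fun r : ℝ => auxg (s⁻¹ * |r|) * Real.cos (t * r)) := by
    refine Integrable.mul_bdd (c := 1) hG (by fun_prop) ?_
    exact Filter.Eventually.of_forall fun x => Real.abs_cos_le_one _
  have hsin : Integrable (fun r : ℝ => auxg (s⁻¹ * |r|) * Real.sin (t * r)) := by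
    refine Integrable.mul_bdd (c := 1) hG (by fun_prop) ?_
    exact Filter.Eventually.of_forall fun x => Real.abs_sin_le_one _
  have hsplit : ∫ r : ℝ, (k r : ℂ) * Complex.exp (Complex.I * r * t) =
      ∫ r : ℝ, (((auxg (s⁻¹ * |r|) * Real.cos (t * r) : ℝ) : ℂ) +
        ((auxg (s⁻¹ * |r|) * Real.sin (t * r) : ℝ) : ℂ) * Complex.I) := by
    refine integral_congr_ae ?_
    filter_upwards [hae] with r hr
    rw [hr, show Complex.I * r * t = ((t * r : ℝ) : ℂ) * Complex.I by push_cast; ring,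
      Complex.exp_mul_I]
    push_cast
    ring
  have hsin0 : ∫ r : ℝ, auxg (s⁻¹ * |r|) * Real.sin (t * r) = 0 := by
    have h := integral_neg_eq_self (fun r : ℝ => auxg (s⁻¹ * |r|) * Real.sin (t * r)) volume
    simp only [abs_neg, mul_neg, Real.sin_neg, integral_neg] at h
    linarith
  have hcos1 : ∫ r : ℝ, auxg (s⁻¹ * |r|) * Real.cos (t * r) =
      2 * ∫ r in Set.Ioi (0:ℝ), auxg (s⁻¹ * r) * Real.cos (t * r) := by
    rw [← integral_comp_abs (f := fun r => auxg (s⁻¹ * r) * Real.cos (t * r))]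
    congr 1
    ext r
    rcases abs_choice r with h | h <;> rw [h] <;> simp
  have hcos2 : ∫ r in Set.Ioi (0:ℝ), auxg (s⁻¹ * r) * Real.cos (t * r) =
      s * ∫ x in Set.Ioi (0:ℝ), auxg x * Real.cos (s * t * x) := by
    have h := integral_comp_mul_left_Ioi (fun x => auxg x * Real.cos (s * t * x)) 0 (inv_pos.2 hs)
    rw [mul_zero, inv_inv, smul_eq_mul] at h
    rw [← h]
    congr 1
    ext r
    congr 2
    field_simp
  rw [hsplit, integral_add hcos.ofReal (hsin.ofReal.mul_const _), integral_mul_const,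
    integral_complex_ofReal, integral_complex_ofReal, hsin0, hcos1, hcos2,
    aux_parts (mul_pos hs ht)]
  simp only [Complex.ofReal_zero, zero_mul, add_zero]
  congr 1
  field_simp
end

section
/- For every σ > 0 and r ≥ 0: ∫₀^∞ max{0, 1 − r/x} · (x/σ²) e^{−x²/(2σ²)} dx = e^{−r²/(2σ²)} − √π · (r/(σ√2)) · erfc(r/(σ√2)), where erfc(x) = (2/√π) ∫_x^∞ e^{−t²} dt is the complementary error function. -/
open MeasureTheory Real

/-- Equation (18): the Polya kernel constructed from the Rayleigh distribution with
scale `σ` equals `e^{-r²/(2σ²)} - √π (r/(σ√2)) erfc(r/(σ√2))` for `r ≥ 0`. -/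
theorem polya_kernel_rayleigh (σ : ℝ) (hσ : 0 < σ) (r : ℝ) (hr : 0 ≤ r) :
    ∫ x in Set.Ioi (0 : ℝ),
        max 0 (1 - r / x) * (x / σ ^ 2 * Real.exp (-(x ^ 2 / (2 * σ ^ 2))))
      = Real.exp (-(r ^ 2 / (2 * σ ^ 2)))
        - Real.sqrt π * (r / (σ * Real.sqrt 2)) * erfc (r / (σ * Real.sqrt 2)) := by
  have hs2 : Real.sqrt 2 ^ 2 = 2 := Real.sq_sqrt (by norm_num)
  have hs2p : 0 < Real.sqrt 2 := by positivity
  have hpi : 0 < Real.sqrt π := Real.sqrt_pos.mpr Real.pi_pos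
  have hb : 0 < 1 / (2 * σ ^ 2) := by positivity
  have hE : ∀ x : ℝ, Real.exp (-(1 / (2 * σ ^ 2)) * x ^ 2) = Real.exp (-(x ^ 2 / (2 * σ ^ 2))) := by
    intro x
    congr 1
    ring
  have hi0 : Integrable fun x : ℝ => Real.exp (-(x ^ 2 / (2 * σ ^ 2))) := by
    simpa only [hE] using integrable_exp_neg_mul_sq hb
  have hi1 : Integrable fun x : ℝ => x / σ ^ 2 * Real.exp (-(x ^ 2 / (2 * σ ^ 2))) := by
    have h := (integrable_mul_exp_neg_mul_sq hb).const_mul (1 / σ ^ 2)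
    simp only [hE] at h
    refine h.congr (Filter.Eventually.of_forall fun x => ?_)
    simp only
    ring
  have h1 : ∫ x in Set.Ioi r, x / σ ^ 2 * Real.exp (-(x ^ 2 / (2 * σ ^ 2)))
      = Real.exp (-(r ^ 2 / (2 * σ ^ 2))) := by
    have h := integral_Ioi_of_hasDerivAt_of_tendsto' (a := r) (m := 0)
      (f := fun x => -Real.exp (-(x ^ 2 / (2 * σ ^ 2))))
      (f' := fun x => x / σ ^ 2 * Real.exp (-(x ^ 2 / (2 * σ ^ 2)))) ?_ hi1.integrableOn ?_
    · rw [h]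
      ring
    · intro x _
      have := ((((hasDerivAt_id x).pow 2).div_const (2 * σ ^ 2)).neg.exp).neg
      refine (this.congr_deriv ?_)
      simp
      field_simp
    · rw [← neg_zero]
      refine Filter.Tendsto.neg ?_
      refine Real.tendsto_exp_neg_atTop_nhds_zero.comp ?_
      exact (Filter.tendsto_pow_atTop (by norm_num)).atTop_div_const (by positivity)
  have h2 : erfc (r / (σ * Real.sqrt 2)) = 2 / Real.sqrt π *
      ((1 / (σ * Real.sqrt 2)) * ∫ x in Set.Ioi r, Real.exp (-(x ^ 2 / (2 * σ ^ 2)))) := by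
    have hc : 0 < 1 / (σ * Real.sqrt 2) := by positivity
    have h := integral_comp_mul_left_Ioi' (fun t => Real.exp (-t ^ 2)) r hc
    rw [one_div_mul_eq_div] at h
    rw [erfc, ← h, smul_eq_mul]
    congr 3
    ext x
    congr 1
    rw [mul_pow, div_pow, mul_pow, hs2]
    ring
  have h3 : ∫ x in Set.Ioi (0 : ℝ),
        max 0 (1 - r / x) * (x / σ ^ 2 * Real.exp (-(x ^ 2 / (2 * σ ^ 2))))
      = ∫ x in Set.Ioi r, (x / σ ^ 2 * Real.exp (-(x ^ 2 / (2 * σ ^ 2)))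
          - r / σ ^ 2 * Real.exp (-(x ^ 2 / (2 * σ ^ 2)))) := by
    rw [setIntegral_eq_of_subset_of_forall_sdiff_eq_zero (s := Set.Ioi r) measurableSet_Ioi
      (Set.Ioi_subset_Ioi hr)]
    · refine setIntegral_congr_fun measurableSet_Ioi fun x hx => ?_
      have hx' : r < x := hx
      have hx0 : 0 < x := hr.trans_lt hx'
      have : 0 ≤ 1 - r / x := by
        rw [sub_nonneg, div_le_one hx0]
        exact hx'.le
      rw [max_eq_right this]
      field_simp
    · rintro x ⟨hx0, hx⟩
      have hx0' : 0 < x := hx0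
      have hx' : x ≤ r := not_lt.mp hx
      have : 1 - r / x ≤ 0 := by
        rw [sub_nonpos, one_le_div hx0']
        exact hx'
      rw [max_eq_left this, zero_mul]
  rw [h3, integral_sub hi1.integrableOn (hi0.const_mul _).integrableOn, h1, integral_const_mul, h2]
  congr 1
  field_simp
  rw [hs2]
  ring
end

section
/- For every scale θ > 0, shape α > 1, and r ≥ 0: ∫₀^∞ max{0, 1 − r/x} · (α/θ)(x/θ)^{α−1} e^{−(x/θ)^α} dx = e^{−(r/θ)^α} − (r/θ) · Γ(1 − 1/α, (r/θ)^α), where Γ(s, t) = ∫_t^∞ u^{s−1} e^{−u} du is the upper incomplete gamma function. -/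
open MeasureTheory Real

/-- Equation (22): the Polya kernel constructed from the Weibull distribution
`Weibull(θ, α)` with scale `θ > 0` and shape `α > 1` equals
`e^{-(r/θ)^α} - (r/θ) Γ(1 - 1/α, (r/θ)^α)` for `r ≥ 0`. -/
theorem polya_kernel_weibull (θ α : ℝ) (hθ : 0 < θ) (hα : 1 < α) (r : ℝ) (hr : 0 ≤ r) :
    ∫ x in Set.Ioi (0 : ℝ),
        max 0 (1 - r / x)
          * (α / θ * (x / θ) ^ (α - 1) * Real.exp (-((x / θ) ^ α)))
      = Real.exp (-((r / θ) ^ α))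
        - (r / θ) * upperIncompleteGamma (1 - 1 / α) ((r / θ) ^ α) := by
  have hα0 : 0 < α := by linarith
  have hs : 0 ≤ r / θ := by positivity
  set s := r / θ with hsdef
  have hrs : r = s * θ := by rw [hsdef]; field_simp
  let G : ℝ → ℝ := fun y => max 0 (1 - s * y ^ (-(1 / α))) * Real.exp (-y)
  let g : ℝ → ℝ := fun x => (α * x ^ (α - 1)) • G (x ^ α)
  have h1 : ∫ x in Set.Ioi (0 : ℝ), max 0 (1 - r / x)
          * (α / θ * (x / θ) ^ (α - 1) * Real.exp (-((x / θ) ^ α)))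
      = ∫ x in Set.Ioi (0 : ℝ), θ⁻¹ * g (θ⁻¹ * x) := by
    refine setIntegral_congr_fun measurableSet_Ioi fun x hx => ?_
    have hx : 0 < x := hx
    have hp : ((θ⁻¹ * x) ^ α) ^ (-(1 / α)) = θ / x := by
      rw [← Real.rpow_mul (by positivity), show α * (-(1 / α)) = -1 by field_simp,
        Real.rpow_neg_one]
      field_simp
    simp only [g, G, hp, smul_eq_mul]
    rw [show θ⁻¹ * x = x / θ by field_simp, hrs, mul_div_assoc s θ x]
    ring
  have h2 : ∫ x in Set.Ioi (0 : ℝ), θ⁻¹ * g (θ⁻¹ * x) = ∫ x in Set.Ioi (0 : ℝ), G x := by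
    rw [integral_const_mul, integral_comp_mul_left_Ioi g 0 (inv_pos.mpr hθ), mul_zero,
      integral_comp_rpow_Ioi_of_pos hα0, smul_eq_mul, inv_inv, ← mul_assoc,
      inv_mul_cancel₀ hθ.ne', one_mul]
  have hsα : 0 ≤ s ^ α := by positivity
  have h3 : ∫ x in Set.Ioi (0 : ℝ), G x = ∫ x in Set.Ioi (s ^ α), G x := by
    refine setIntegral_eq_of_subset_of_forall_sdiff_eq_zero measurableSet_Ioi
      (Set.Ioi_subset_Ioi hsα) ?_
    rintro y ⟨hy, hy'⟩
    have hy : 0 < y := hy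
    have hy' : y ≤ s ^ α := not_lt.mp hy'
    have h : y ^ (1 / α) ≤ s := by
      calc y ^ (1 / α) ≤ (s ^ α) ^ (1 / α) := Real.rpow_le_rpow hy.le hy' (by positivity)
        _ = s := by rw [← Real.rpow_mul hs, mul_one_div_cancel hα0.ne', Real.rpow_one]
    have hpos : 0 < y ^ (1 / α) := by positivity
    have : 1 - s * y ^ (-(1 / α)) ≤ 0 := by
      rw [Real.rpow_neg hy.le, ← div_eq_mul_inv, sub_nonpos, one_le_div hpos]
      exact h
    simp only [G, max_eq_left this, zero_mul]
  have h4 : ∫ x in Set.Ioi (s ^ α), G x = ∫ x in Set.Ioi (s ^ α),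
      (Real.exp (-x) - s * (x ^ ((1 - 1 / α) - 1) * Real.exp (-x))) := by
    refine setIntegral_congr_fun measurableSet_Ioi fun y hy => ?_
    have hy' : s ^ α < y := hy
    have hy : 0 < y := lt_of_le_of_lt hsα hy'
    have h : s ≤ y ^ (1 / α) := by
      calc s = (s ^ α) ^ (1 / α) := by
            rw [← Real.rpow_mul hs, mul_one_div_cancel hα0.ne', Real.rpow_one]
        _ ≤ _ := Real.rpow_le_rpow hsα hy'.le (by positivity)
    have hpos : 0 < y ^ (1 / α) := by positivity
    have : 0 ≤ 1 - s * y ^ (-(1 / α)) := by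
      rw [Real.rpow_neg hy.le, ← div_eq_mul_inv, sub_nonneg, div_le_one hpos]
      exact h
    simp only [G, max_eq_right this]
    rw [show 1 - 1 / α - 1 = -(1 / α) by ring]
    ring
  have hint : IntegrableOn (fun x : ℝ => x ^ ((1 - 1 / α) - 1) * Real.exp (-x))
      (Set.Ioi (s ^ α)) := by
    have h : 0 < 1 - 1 / α := by
      rw [sub_pos, div_lt_one hα0]; exact hα
    have := (Real.GammaIntegral_convergent h).mono_set (Set.Ioi_subset_Ioi hsα)
    simpa only [mul_comm] using this
  rw [h1, h2, h3, h4, integral_sub (integrableOn_exp_neg_Ioi _) (hint.const_mul s),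
    integral_const_mul, integral_exp_neg_Ioi, upperIncompleteGamma]
end

section
/- For every w > 0 and all x, x' ∈ ℝ, the Lebesgue measure of the set {b ∈ [0, w) : ⌊(x − b)/w⌋ = ⌊(x' − b)/w⌋} equals w · max{0, 1 − |x − x'|/w}. In other words, if the offset b is drawn uniformly from [0, w), the probability that x and x' fall in the same bin of the grid {b + m w : m ∈ ℤ} of spacing w equals max{0, 1 − |x − x'|/w}. -/
open MeasureTheory

lemma rb_aux (w : ℝ) (hw : 0 < w) (x x' : ℝ) (hx : x ≤ x') :
    volume {b : ℝ | b ∈ Set.Ico (0 : ℝ) w ∧ ⌊(x - b) / w⌋ = ⌊(x' - b) / w⌋}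
      = ENNReal.ofReal (w * max 0 (1 - |x - x'| / w)) := by
  set A : Set ℝ := {b : ℝ | ⌊(x - b) / w⌋ = ⌊(x' - b) / w⌋} with hA
  have hAm : MeasurableSet A := by
    apply measurableSet_eq_fun <;> fun_prop
  have h1 : {b : ℝ | b ∈ Set.Ico (0 : ℝ) w ∧ ⌊(x - b) / w⌋ = ⌊(x' - b) / w⌋}
      = Set.Ico 0 w ∩ A := rfl
  have h2 : volume (Set.Ico 0 w ∩ A) = volume (A ∩ Set.Ioc 0 (0 + w)) := by
    rw [Set.inter_comm, zero_add]
    exact measure_congr ((ae_eq_refl A).inter Ico_ae_eq_Ioc)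
  have h3 : volume (A ∩ Set.Ioc 0 (0 + w)) = volume (A ∩ Set.Ioc (x - w) (x - w + w)) := by
    refine (isAddFundamentalDomain_Ioc hw 0).measure_set_eq
      (isAddFundamentalDomain_Ioc hw (x - w)) hAm ?_
    rintro ⟨g, n, rfl⟩
    ext b
    have e : ∀ y : ℝ, (y - (n * w + b)) / w = (y - b) / w - n := by
      intro y; field_simp; ring
    simp [hA, AddSubgroup.vadd_def, e]
  have h4 : A ∩ Set.Ioc (x - w) (x - w + w) = Set.Ioc (x' - w) x := by
    ext b
    simp only [hA, Set.mem_inter_iff, Set.mem_setOf_eq, Set.mem_Ioc, sub_add_cancel]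
    have key : x - w < b → b ≤ x → ⌊(x - b) / w⌋ = 0 := by
      intro p q
      rw [Int.floor_eq_zero_iff]
      exact ⟨div_nonneg (by linarith) hw.le, by rw [div_lt_one hw]; linarith⟩
    constructor
    · rintro ⟨e, p, q⟩
      rw [key p q] at e
      have := (Int.floor_eq_zero_iff.1 e.symm).2
      rw [div_lt_one hw] at this
      exact ⟨by linarith, q⟩
    · rintro ⟨p, q⟩
      refine ⟨?_, by linarith, q⟩
      rw [key (by linarith) q, eq_comm, Int.floor_eq_zero_iff]
      exact ⟨div_nonneg (by linarith) hw.le, by rw [div_lt_one hw]; linarith⟩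
  rw [h1, h2, h3, h4, Real.volume_Ioc, mul_max_of_nonneg _ _ hw.le,
    abs_of_nonpos (by linarith), mul_zero, ENNReal.ofReal_max, ENNReal.ofReal_zero,
    max_eq_right (zero_le)]
  congr 1
  field_simp
  ring

/-- For a random grid of spacing `w > 0` with offset `b` uniform on `[0, w)`, the
probability that two points `x, x'` fall into the same bin is
`max 0 (1 - |x - x'|/w)`: the Lebesgue measure of the set of offsets
`b ∈ [0, w)` with `⌊(x - b)/w⌋ = ⌊(x' - b)/w⌋` equals `w * max 0 (1 - |x - x'|/w)`. -/
theorem random_binning_same_bin_probability (w : ℝ) (hw : 0 < w) (x x' : ℝ) :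
    volume {b : ℝ | b ∈ Set.Ico (0 : ℝ) w ∧ ⌊(x - b) / w⌋ = ⌊(x' - b) / w⌋}
      = ENNReal.ofReal (w * max 0 (1 - |x - x'| / w)) := by
  rcases le_total x x' with h | h
  · exact rb_aux w hw x x' h
  · rw [abs_sub_comm, ← rb_aux w hw x' x h]
    simp only [eq_comm]
end

section
/- Let μ be a probability measure on ℝ that is symmetric under negation, and let k(r) = ∫_ℝ cos(r x) dμ(x) be its (real-valued) characteristic function. Fix real numbers x₁, …, xₙ and set K_{ij} = k(x_i − x_j). Let w₁, …, w_D be independent random variables each with law μ, and for l = 1, …, D let K̃^{(l)} be the complex n×n matrix with entries K̃^{(l)}_{ij} = e^{i w_l (x_i − x_j)}. Then E[(1/D) Σ_{l=1}^D K̃^{(l)}_{ij}] = K_{ij} for all i, j, and E[Σ_{i,j=1}^n |(1/D) Σ_{l=1}^D K̃^{(l)}_{ij} − K_{ij}|²] = (1/D)(n² − Σ_{i,j=1}^n K_{ij}²). -/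
open MeasureTheory ProbabilityTheory

theorem rff_aux (μ : Measure ℝ) [IsProbabilityMeasure μ] (D : ℕ) (hD : 0 < D)
    {Ω : Type*} [MeasurableSpace Ω] (P : Measure Ω) [IsProbabilityMeasure P]
    (w : Fin D → Ω → ℝ)
    (hmeas : ∀ l, Measurable (w l))
    (hindep : iIndepFun (m := fun _ : Fin D => (inferInstance : MeasurableSpace ℝ)) w P)
    (hlaw : ∀ l, P.map (w l) = μ) (g : ℝ → ℝ) (hg : Measurable g) (hb : ∀ t, |g t| ≤ 1)
    (m : ℝ) (hm : ∫ t, g t ∂μ = m) :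
    Integrable (fun ω => ((D : ℝ)⁻¹ * ∑ l, g (w l ω) - m) ^ 2) P ∧
    ∫ ω, (D : ℝ)⁻¹ * ∑ l, g (w l ω) ∂P = m ∧
    ∫ ω, ((D : ℝ)⁻¹ * ∑ l, g (w l ω) - m) ^ 2 ∂P = (D : ℝ)⁻¹ * (∫ t, g t ^ 2 ∂μ - m ^ 2) := by
  have hD' : (D : ℝ) ≠ 0 := by positivity
  have hgm : ∀ l, Measurable (fun ω => g (w l ω)) := fun l => hg.comp (hmeas l)
  have hL : ∀ l, MemLp (fun ω => g (w l ω)) 2 P := fun l =>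
    MemLp.of_bound (hgm l).aestronglyMeasurable 1 (Filter.Eventually.of_forall fun ω => by
      simpa using hb _)
  have hE : ∀ l, ∫ ω, g (w l ω) ∂P = m := fun l => by
    rw [← hm, ← hlaw l, integral_map (hmeas l).aemeasurable hg.aestronglyMeasurable]
  have hE2 : ∀ l, ∫ ω, g (w l ω) ^ 2 ∂P = ∫ t, g t ^ 2 ∂μ := fun l => by
    rw [← hlaw l, integral_map (hmeas l).aemeasurable (hg.pow_const 2).aestronglyMeasurable]
  have hLs : MemLp (fun ω => (D : ℝ)⁻¹ * ∑ l, g (w l ω)) 2 P :=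
    (memLp_finsetSum _ fun l _ => hL l).const_mul _
  have hmean : ∫ ω, (D : ℝ)⁻¹ * ∑ l, g (w l ω) ∂P = m := by
    rw [integral_const_mul, integral_finsetSum _ fun l _ => (hL l).integrable (by norm_num)]
    simp [hE, hD']
  refine ⟨(hLs.sub (memLp_const m)).integrable_sq, hmean, ?_⟩
  have hv := variance_eq_integral (μ := P) hLs.aestronglyMeasurable.aemeasurable
  rw [hmean] at hv
  rw [← hv, variance_const_mul]
  have hs := IndepFun.variance_sum (μ := P) (s := Finset.univ) (X := fun l ω => g (w l ω))
    (fun l _ => hL l) (fun i _ j _ hij => (hindep.indepFun hij).comp hg hg)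
  have h3 : (∑ l, fun ω => g (w l ω)) = fun ω => ∑ l, g (w l ω) := by
    ext ω; simp
  rw [h3] at hs
  rw [hs]
  have : ∀ l, Var[fun ω => g (w l ω); P] = ∫ t, g t ^ 2 ∂μ - m ^ 2 := fun l => by
    rw [variance_eq_sub (hL l), hE l, ← hE2 l]; rfl
  simp [this]
  field_simp

/-- Theorem 4.1 (complex case): unbiasedness and exact expected squared Frobenius-norm
error of the complex random Fourier feature map. Here `μ` is a symmetric probability
measure on `ℝ` with real characteristic function `k`, `K` is the kernel matrix on
points `x₁, …, xₙ`, and `w₁, …, w_D` are i.i.d. with law `μ`. -/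
theorem random_fourier_complex_unbiased_and_error
    (μ : Measure ℝ) [IsProbabilityMeasure μ]
    (hsymm : μ.map (fun x : ℝ => -x) = μ)
    (k : ℝ → ℝ) (hk : ∀ r : ℝ, k r = ∫ x : ℝ, Real.cos (r * x) ∂μ)
    (n : ℕ) (x : Fin n → ℝ)
    (K : Fin n → Fin n → ℝ) (hK : ∀ i j, K i j = k (x i - x j))
    (D : ℕ) (hD : 0 < D)
    {Ω : Type*} [MeasurableSpace Ω] (P : Measure Ω) [IsProbabilityMeasure P]
    (w : Fin D → Ω → ℝ)
    (hmeas : ∀ l, Measurable (w l))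
    (hindep : iIndepFun (m := fun _ : Fin D => (inferInstance : MeasurableSpace ℝ)) w P)
    (hlaw : ∀ l, P.map (w l) = μ) :
    (∀ i j, (∫ ω, ((D : ℂ))⁻¹ *
        ∑ l : Fin D, Complex.exp (Complex.I * (w l ω) * ((x i : ℂ) - (x j : ℂ))) ∂P)
      = (K i j : ℂ)) ∧
    (∫ ω, ∑ i : Fin n, ∑ j : Fin n,
        ‖((D : ℂ))⁻¹ *
          (∑ l : Fin D, Complex.exp (Complex.I * (w l ω) * ((x i : ℂ) - (x j : ℂ))))
          - (K i j : ℂ)‖ ^ 2 ∂P)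
      = ((D : ℝ))⁻¹ * ((n : ℝ) ^ 2 - ∑ i : Fin n, ∑ j : Fin n, (K i j) ^ 2) := by
  have hsin : ∀ r : ℝ, ∫ t, Real.sin (r * t) ∂μ = 0 := fun r => by
    have h : ∫ t, Real.sin (r * t) ∂μ = ∫ t, Real.sin (r * -t) ∂μ := by
      conv_lhs => rw [← hsymm]
      rw [integral_map (by fun_prop) (by fun_prop)]
    simp only [mul_neg, Real.sin_neg, integral_neg] at h
    linarith
  have hc := fun i j => rff_aux μ D hD P w hmeas hindep hlaw
    (fun t => Real.cos ((x i - x j) * t)) (by fun_prop) (fun t => Real.abs_cos_le_one _)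
    (K i j) (by rw [hK, hk])
  have hs := fun i j => rff_aux μ D hD P w hmeas hindep hlaw
    (fun t => Real.sin ((x i - x j) * t)) (by fun_prop) (fun t => Real.abs_sin_le_one _)
    0 (hsin _)
  have hexp : ∀ i j ω, ((D : ℂ))⁻¹ *
      ∑ l : Fin D, Complex.exp (Complex.I * (w l ω) * ((x i : ℂ) - (x j : ℂ)))
      = (((D : ℝ)⁻¹ * ∑ l, Real.cos ((x i - x j) * w l ω) : ℝ) : ℂ)
        + (((D : ℝ)⁻¹ * ∑ l, Real.sin ((x i - x j) * w l ω) : ℝ) : ℂ) * Complex.I := by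
    intro i j ω
    have : ∀ l, Complex.exp (Complex.I * (w l ω) * ((x i : ℂ) - (x j : ℂ)))
        = Complex.cos ((x i - x j) * w l ω) + Complex.sin ((x i - x j) * w l ω) * Complex.I := by
      intro l
      rw [← Complex.exp_mul_I]; congr 1; ring
    simp only [this, Finset.sum_add_distrib, ← Finset.sum_mul]
    push_cast
    ring
  have hint : ∀ g : ℝ → ℝ, Measurable g → (∀ t, |g t| ≤ 1) →
      Integrable (fun ω => (D : ℝ)⁻¹ * ∑ l, g (w l ω)) P := by
    intro g hg hb
    refine (integrable_finsetSum _ fun l _ => ?_).const_mul _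
    exact Integrable.of_bound (hg.comp (hmeas l)).aestronglyMeasurable 1
      (Filter.Eventually.of_forall fun ω => by simpa using hb _)
  constructor
  · intro i j
    simp only [hexp]
    rw [integral_add, integral_mul_const, integral_complex_ofReal, integral_complex_ofReal, (hc i j).2.1,
      (hs i j).2.1]
    · simp
    · exact (hint (fun t => Real.cos ((x i - x j) * t)) (by fun_prop)
        (fun t => Real.abs_cos_le_one _)).ofReal
    · exact (hint (fun t => Real.sin ((x i - x j) * t)) (by fun_prop)
        (fun t => Real.abs_sin_le_one _)).ofReal.mul_const _
  · have hn : ∀ i j ω, ‖((D : ℂ))⁻¹ *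
          (∑ l : Fin D, Complex.exp (Complex.I * (w l ω) * ((x i : ℂ) - (x j : ℂ))))
          - (K i j : ℂ)‖ ^ 2 = ((D : ℝ)⁻¹ * ∑ l, Real.cos ((x i - x j) * w l ω) - K i j) ^ 2
          + ((D : ℝ)⁻¹ * ∑ l, Real.sin ((x i - x j) * w l ω) - 0) ^ 2 := by
      intro i j ω
      rw [hexp, add_sub_right_comm, ← Complex.ofReal_sub, ← Complex.normSq_eq_norm_sq,
        Complex.normSq_add_mul_I, sub_zero]
    simp only [hn]
    have hI : ∀ i j, Integrable (fun ω =>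
        ((D : ℝ)⁻¹ * ∑ l, Real.cos ((x i - x j) * w l ω) - K i j) ^ 2
          + ((D : ℝ)⁻¹ * ∑ l, Real.sin ((x i - x j) * w l ω) - 0) ^ 2) P :=
      fun i j => (hc i j).1.add (hs i j).1
    have hcs : ∀ r : ℝ, ∫ t, Real.cos (r * t) ^ 2 ∂μ + ∫ t, Real.sin (r * t) ^ 2 ∂μ = 1 := by
      intro r
      rw [← integral_add]
      · simp
      · exact Integrable.of_bound (by fun_prop) 1 (Filter.Eventually.of_forall fun t => by
          simpa using Real.abs_cos_le_one _)
      · exact Integrable.of_bound (by fun_prop) 1 (Filter.Eventually.of_forall fun t => by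
          simpa using Real.abs_sin_le_one _)
    rw [integral_finsetSum _ fun i _ => integrable_finsetSum _ fun j _ => hI i j]
    have hv : ∀ i j, ∫ ω, (((D : ℝ)⁻¹ * ∑ l, Real.cos ((x i - x j) * w l ω) - K i j) ^ 2
          + ((D : ℝ)⁻¹ * ∑ l, Real.sin ((x i - x j) * w l ω) - 0) ^ 2) ∂P
          = (D : ℝ)⁻¹ * (1 - K i j ^ 2) := by
      intro i j
      rw [integral_add (hc i j).1 (hs i j).1, (hc i j).2.2, (hs i j).2.2, ← hcs (x i - x j)]
      ring
    have : ∀ i, ∫ ω, ∑ j, (((D : ℝ)⁻¹ * ∑ l, Real.cos ((x i - x j) * w l ω) - K i j) ^ 2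
          + ((D : ℝ)⁻¹ * ∑ l, Real.sin ((x i - x j) * w l ω) - 0) ^ 2) ∂P
          = ∑ j, (D : ℝ)⁻¹ * (1 - K i j ^ 2) := by
      intro i
      rw [integral_finsetSum _ fun j _ => hI i j]
      simp only [hv]
    simp only [this, ← Finset.mul_sum, Finset.sum_sub_distrib]
    simp [sq]
end

section
/- Let μ be a probability measure on ℝ that is symmetric under negation, with real characteristic function k(r) = ∫_ℝ cos(r x) dμ(x). Fix real numbers x₁, …, xₙ and set K_{ij} = k(x_i − x_j). Let (w_l, b_l), l = 1, …, D, be independent random pairs where, for each l, w_l has law μ, b_l is uniform on (0, 2π), and w_l and b_l are independent. For each l let K̃^{(l)} be the real n×n matrix with entries K̃^{(l)}_{ij} = 2 cos(w_l x_i + b_l) cos(w_l x_j + b_l). Then E[(1/D) Σ_{l=1}^D K̃^{(l)}_{ij}] = K_{ij} for all i, j, and E[Σ_{i,j=1}^n ((1/D) Σ_{l=1}^D K̃^{(l)}_{ij} − K_{ij})²] = (1/D)(n² + (1/2) Σ_{i,j=1}^n k(2(x_i − x_j)) − Σ_{i,j=1}^n K_{ij}²). -/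
open MeasureTheory ProbabilityTheory Real

noncomputable def rffU : Measure ℝ :=
  (ENNReal.ofReal (2 * π))⁻¹ • volume.restrict (Set.Ioo (0 : ℝ) (2 * π))

instance rffU_prob : IsProbabilityMeasure rffU := by
  constructor
  have h : ENNReal.ofReal (2 * π) ≠ 0 := by
    have := Real.pi_pos
    simp [ENNReal.ofReal_eq_zero]; positivity
  simp only [rffU, Measure.smul_apply, Measure.restrict_apply MeasurableSet.univ, Set.univ_inter,
    Real.volume_Ioo, sub_zero, smul_eq_mul]
  exact ENNReal.inv_mul_cancel h ENNReal.ofReal_ne_top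

lemma rffU_cos (c : ℝ) (m : ℕ) (hm : m ≠ 0) : ∫ b, Real.cos (c + m * b) ∂rffU = 0 := by
  have hm' : (m : ℝ) ≠ 0 := by exact_mod_cast hm
  rw [rffU, integral_smul_measure, ← integral_Ioc_eq_integral_Ioo,
    ← intervalIntegral.integral_of_le (by positivity),
    intervalIntegral.integral_comp_add_mul (fun y => Real.cos y) hm', integral_cos]
  rw [Real.sin_add_nat_mul_two_pi]
  simp

lemma rff_integrable {α : Type*} [MeasurableSpace α] (ρ : Measure α) [IsProbabilityMeasure ρ]
    (g : α → ℝ) (hg : Measurable g) : Integrable (fun a => Real.cos (g a)) ρ :=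
  Integrable.of_bound (Real.measurable_cos.comp hg).aestronglyMeasurable 1
    (Filter.Eventually.of_forall fun a => by simpa using Real.abs_cos_le_one (g a))

lemma rff_prod_cos (μ : Measure ℝ) [IsProbabilityMeasure μ] (c : ℝ) (m : ℕ) (hm : m ≠ 0) :
    ∫ p, Real.cos (p.1 * c + m * p.2) ∂(μ.prod rffU) = 0 := by
  rw [integral_prod _ (rff_integrable _ _ (by fun_prop))]
  simp [rffU_cos _ m hm]

lemma rff_prod_fst (μ : Measure ℝ) [IsProbabilityMeasure μ] (c : ℝ) :
    ∫ p, Real.cos (c * p.1) ∂(μ.prod rffU) = ∫ x, Real.cos (c * x) ∂μ := by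
  rw [integral_prod _ (rff_integrable _ _ (by fun_prop))]
  simp

lemma rff_mean (μ : Measure ℝ) [IsProbabilityMeasure μ] (a b : ℝ) :
    ∫ p, 2 * Real.cos (p.1 * a + p.2) * Real.cos (p.1 * b + p.2) ∂(μ.prod rffU)
      = ∫ x, Real.cos ((a - b) * x) ∂μ := by
  have e : ∀ p : ℝ × ℝ, 2 * Real.cos (p.1 * a + p.2) * Real.cos (p.1 * b + p.2)
      = Real.cos ((a - b) * p.1) + Real.cos (p.1 * (a + b) + (2 : ℕ) * p.2) := by
    intro p
    rw [Real.two_mul_cos_mul_cos]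
    congr 2 <;> push_cast <;> ring
  simp_rw [e]
  rw [integral_add (rff_integrable _ _ (by fun_prop)) (rff_integrable _ _ (by fun_prop)),
    rff_prod_cos _ _ _ (by norm_num), rff_prod_fst, add_zero]

lemma rff_sq (μ : Measure ℝ) [IsProbabilityMeasure μ] (a b : ℝ) :
    ∫ p, (2 * Real.cos (p.1 * a + p.2) * Real.cos (p.1 * b + p.2)) ^ 2 ∂(μ.prod rffU)
      = 1 + 1 / 2 * ∫ x, Real.cos (2 * (a - b) * x) ∂μ := by
  have e : ∀ p : ℝ × ℝ, (2 * Real.cos (p.1 * a + p.2) * Real.cos (p.1 * b + p.2)) ^ 2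
      = (1 + 1 / 2 * Real.cos (2 * (a - b) * p.1)) +
        ((Real.cos (p.1 * (2 * a) + (2 : ℕ) * p.2) + Real.cos (p.1 * (2 * b) + (2 : ℕ) * p.2)) +
        1 / 2 * Real.cos (p.1 * (2 * (a + b)) + (4 : ℕ) * p.2)) := by
    intro p
    have h1 := Real.cos_sq (p.1 * a + p.2)
    have h2 := Real.cos_sq (p.1 * b + p.2)
    have h3 := Real.two_mul_cos_mul_cos (2 * (p.1 * a + p.2)) (2 * (p.1 * b + p.2))
    have e1 : Real.cos (2 * (a - b) * p.1)
        = Real.cos (2 * (p.1 * a + p.2) - 2 * (p.1 * b + p.2)) := by congr 1; ring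
    have e2 : Real.cos (p.1 * (2 * a) + (2 : ℕ) * p.2) = Real.cos (2 * (p.1 * a + p.2)) := by
      congr 1; push_cast; ring
    have e3 : Real.cos (p.1 * (2 * b) + (2 : ℕ) * p.2) = Real.cos (2 * (p.1 * b + p.2)) := by
      congr 1; push_cast; ring
    have e4 : Real.cos (p.1 * (2 * (a + b)) + (4 : ℕ) * p.2)
        = Real.cos (2 * (p.1 * a + p.2) + 2 * (p.1 * b + p.2)) := by
      congr 1; push_cast; ring
    rw [e1, e2, e3, e4, mul_pow, mul_pow, h1, h2]
    linarith
  have i1 := fun c : ℝ => rff_integrable (μ.prod rffU) (fun p => c * p.1) (by fun_prop)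
  have i2 := fun (c : ℝ) (m : ℕ) =>
    rff_integrable (μ.prod rffU) (fun p => p.1 * c + m * p.2) (by fun_prop)
  simp_rw [e]
  have j1 := (integrable_const (μ := μ.prod rffU) (1 : ℝ)).add ((i1 (2 * (a - b))).const_mul (1 / 2))
  have j2 := (i2 (2 * a) 2).add (i2 (2 * b) 2)
  have j3 := j2.add ((i2 (2 * (a + b)) 4).const_mul (1 / 2))
  refine (integral_add j1 j3).trans ?_
  simp only [Pi.add_apply]
  rw [integral_add (integrable_const _) ((i1 _).const_mul _),
    integral_add (by exact j2) ((i2 _ _).const_mul _),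
    integral_add (i2 _ _) (i2 _ _), integral_const_mul, integral_const_mul,
    rff_prod_cos _ _ _ (by norm_num), rff_prod_cos _ _ _ (by norm_num),
    rff_prod_cos _ _ _ (by norm_num), rff_prod_fst]
  simp


/-- Theorem 4.1 (real case): unbiasedness and exact expected squared Frobenius-norm
error of the real random Fourier feature map `z(x) = √2 cos(w x + b)`. Here `μ` is a
symmetric probability measure on `ℝ` with real characteristic function `k`, `K` is the
kernel matrix on points `x₁, …, xₙ`, and `(w_l, b_l)` are i.i.d. pairs with `w_l` of
law `μ` and `b_l` uniform on `(0, 2π)`, independent of each other. -/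
theorem random_fourier_real_unbiased_and_error
    (μ : Measure ℝ) [IsProbabilityMeasure μ]
    (hsymm : μ.map (fun x : ℝ => -x) = μ)
    (k : ℝ → ℝ) (hk : ∀ r : ℝ, k r = ∫ x : ℝ, Real.cos (r * x) ∂μ)
    (n : ℕ) (x : Fin n → ℝ)
    (K : Fin n → Fin n → ℝ) (hK : ∀ i j, K i j = k (x i - x j))
    (D : ℕ) (hD : 0 < D)
    {Ω : Type*} [MeasurableSpace Ω] (P : Measure Ω) [IsProbabilityMeasure P]
    (wb : Fin D → Ω → ℝ × ℝ)
    (hmeas : ∀ l, Measurable (wb l))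
    (hindep : iIndepFun (m := fun _ : Fin D => (inferInstance : MeasurableSpace (ℝ × ℝ))) wb P)
    (hlaw : ∀ l, P.map (wb l)
      = μ.prod ((ENNReal.ofReal (2 * π))⁻¹ • volume.restrict (Set.Ioo (0 : ℝ) (2 * π)))) :
    (∀ i j, (∫ ω, ((D : ℝ))⁻¹ *
        ∑ l : Fin D, 2 * Real.cos ((wb l ω).1 * x i + (wb l ω).2)
          * Real.cos ((wb l ω).1 * x j + (wb l ω).2) ∂P)
      = K i j) ∧
    (∫ ω, ∑ i : Fin n, ∑ j : Fin n,
        (((D : ℝ))⁻¹ *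
          (∑ l : Fin D, 2 * Real.cos ((wb l ω).1 * x i + (wb l ω).2)
            * Real.cos ((wb l ω).1 * x j + (wb l ω).2))
          - K i j) ^ 2 ∂P)
      = ((D : ℝ))⁻¹ * ((n : ℝ) ^ 2
          + (1 / 2) * ∑ i : Fin n, ∑ j : Fin n, k (2 * (x i - x j))
          - ∑ i : Fin n, ∑ j : Fin n, (K i j) ^ 2) := by
  set F : Fin n → Fin n → ℝ × ℝ → ℝ := fun i j p =>
    2 * Real.cos (p.1 * x i + p.2) * Real.cos (p.1 * x j + p.2) with hF
  have hFm : ∀ i j, Measurable (F i j) := fun i j => by simp only [hF]; fun_prop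
  have hlaw' : ∀ l, P.map (wb l) = μ.prod rffU := hlaw
  have hD' : (D : ℝ) ≠ 0 := by exact_mod_cast hD.ne'
  have hL : ∀ i j l, MemLp (fun ω => F i j (wb l ω)) 2 P := fun i j l =>
    MemLp.of_bound ((hFm i j).comp (hmeas l)).aestronglyMeasurable 2
      (Filter.Eventually.of_forall fun ω => by
        simp only [hF, Real.norm_eq_abs, abs_mul, abs_two]
        have h1 := Real.abs_cos_le_one ((wb l ω).1 * x i + (wb l ω).2)
        have h2 := Real.abs_cos_le_one ((wb l ω).1 * x j + (wb l ω).2)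
        have := mul_le_one₀ h1 (abs_nonneg _) h2
        linarith)
  have hmean : ∀ i j l, ∫ ω, F i j (wb l ω) ∂P = K i j := by
    intro i j l
    rw [← integral_map (f := F i j) (hmeas l).aemeasurable (hFm i j).aestronglyMeasurable, hlaw', hK, hk]
    exact rff_mean μ (x i) (x j)
  have hsq : ∀ i j l, ∫ ω, (F i j (wb l ω)) ^ 2 ∂P = 1 + 1 / 2 * k (2 * (x i - x j)) := by
    intro i j l
    rw [← integral_map (f := fun p => F i j p ^ 2) (hmeas l).aemeasurable
      ((hFm i j).pow_const 2).aestronglyMeasurable, hlaw', hk]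
    exact rff_sq μ (x i) (x j)
  have hvar : ∀ i j l, variance (fun ω => F i j (wb l ω)) P
      = 1 + 1 / 2 * k (2 * (x i - x j)) - K i j ^ 2 := by
    intro i j l
    rw [variance_eq_sub (hL i j l), hmean]
    congr 1
    exact hsq i j l
  have hmeanS : ∀ i j, ∫ ω, (D : ℝ)⁻¹ * ∑ l : Fin D, F i j (wb l ω) ∂P = K i j := by
    intro i j
    rw [integral_const_mul, integral_finsetSum _ fun l _ => (hL i j l).integrable (by norm_num)]
    simp [hmean, hD']
  have hLS : ∀ i j, MemLp (fun ω => (D : ℝ)⁻¹ * ∑ l : Fin D, F i j (wb l ω)) 2 P := fun i j =>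
    (memLp_finsetSum _ fun l _ => hL i j l).const_mul _
  have hE : ∀ i j, ∫ ω, ((D : ℝ)⁻¹ * (∑ l : Fin D, F i j (wb l ω)) - K i j) ^ 2 ∂P
      = (D : ℝ)⁻¹ * (1 + 1 / 2 * k (2 * (x i - x j)) - K i j ^ 2) := by
    intro i j
    have h1 := variance_eq_integral (hLS i j).aestronglyMeasurable.aemeasurable
    rw [hmeanS] at h1
    rw [← h1, variance_const_mul]
    have h2 := IndepFun.variance_sum (μ := P) (s := Finset.univ)
      (X := fun l ω => F i j (wb l ω)) (fun l _ => hL i j l)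
      (fun a _ b _ hab => (hindep.indepFun hab).comp (hFm i j) (hFm i j))
    have h3 : (∑ l : Fin D, fun ω => F i j (wb l ω)) = fun ω => ∑ l : Fin D, F i j (wb l ω) := by
      ext ω; simp
    rw [h3] at h2
    rw [h2]
    simp only [hvar, Finset.sum_const, Finset.card_univ, Fintype.card_fin, nsmul_eq_mul]
    field_simp
  refine ⟨hmeanS, ?_⟩
  have hI : ∀ i j, Integrable
      (fun ω => ((D : ℝ)⁻¹ * (∑ l : Fin D, F i j (wb l ω)) - K i j) ^ 2) P := fun i j =>
    ((hLS i j).sub (memLp_const (K i j))).integrable_sq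
  change ∫ ω, ∑ i : Fin n, ∑ j : Fin n,
    ((D : ℝ)⁻¹ * (∑ l : Fin D, F i j (wb l ω)) - K i j) ^ 2 ∂P = _
  rw [integral_finsetSum _ fun i _ => integrable_finsetSum _ fun j _ => hI i j]
  simp_rw [integral_finsetSum _ fun j _ => hI _ j, hE, ← Finset.mul_sum,
    Finset.sum_sub_distrib, Finset.sum_add_distrib, ← Finset.mul_sum]
  simp
  left
  ring
end

section
/- Let μ be a probability measure on ℝ with μ((−∞,0]) = 0, with Polya kernel k_μ(r) = ∫₀^∞ max{0, 1 − |r|/x} dμ(x). Fix real numbers x₁, …, xₙ and set K_{ij} = k_μ(x_i − x_j). Let (w_l, b_l), l = 1, …, D, be independent random pairs whose common joint law is: w has law μ and, conditionally on w, b is uniform on (0, w) (i.e., the joint law assigns to a set A the value ∫₀^∞ (1/w) ∫₀^w 1_A(w, b) db dμ(w)). For each l let K̃^{(l)} be the n×n matrix with entries K̃^{(l)}_{ij} = 1 if ⌊(x_i − b_l)/w_l⌋ = ⌊(x_j − b_l)/w_l⌋ and 0 otherwise. Then for each pair (i, j), K̃^{(1)}_{ij} is a Bernoulli random variable with success probability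 K_{ij}; E[(1/D) Σ_{l=1}^D K̃^{(l)}_{ij}] = K_{ij} for all i, j; and E[Σ_{i,j=1}^n ((1/D) Σ_{l=1}^D K̃^{(l)}_{ij} − K_{ij})²] = (1/D)(Σ_{i,j=1}^n K_{ij} − Σ_{i,j=1}^n K_{ij}²). -/
open MeasureTheory ProbabilityTheory

lemma rb_floor_meas (y : ℝ) : Measurable (fun p : ℝ × ℝ => ⌊(y - p.2) / p.1⌋) :=
  Int.measurable_floor.comp ((measurable_const.sub measurable_snd).div measurable_fst)

lemma rb_set_meas (y z : ℝ) :
    MeasurableSet {p : ℝ × ℝ | ⌊(y - p.2) / p.1⌋ = ⌊(z - p.2) / p.1⌋} :=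
  measurableSet_eq_fun (rb_floor_meas y) (rb_floor_meas z)

lemma rb_vol_le (y z w : ℝ) (hw : 0 < w) (hyz : y ≤ z) :
    volume {b : ℝ | b ∈ Set.Ioo (0 : ℝ) w ∧ ⌊(y - b) / w⌋ = ⌊(z - b) / w⌋}
      = ENNReal.ofReal (w - (z - y)) := by
  set S : Set ℝ := {b : ℝ | ⌊(y - b) / w⌋ = ⌊(z - b) / w⌋} with hS
  have hSm : MeasurableSet S := (measurable_prodMk_left (x := w)) (rb_set_meas y z)
  have e1 : volume {b : ℝ | b ∈ Set.Ioo (0 : ℝ) w ∧ ⌊(y - b) / w⌋ = ⌊(z - b) / w⌋}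
      = volume (S ∩ Set.Ioc 0 (0 + w)) := by
    have : {b : ℝ | b ∈ Set.Ioo (0 : ℝ) w ∧ ⌊(y - b) / w⌋ = ⌊(z - b) / w⌋}
      = S ∩ Set.Ioo 0 w := by
      ext b; simp only [hS, Set.mem_setOf_eq, Set.mem_inter_iff]; tauto
    rw [this, zero_add]
    exact measure_congr ((ae_eq_refl S).inter Ioo_ae_eq_Ioc)
  have hper : ∀ g : AddSubgroup.zmultiples w, (fun x => g +ᵥ x) ⁻¹' S = S := by
    rintro ⟨g, hg⟩
    obtain ⟨m, rfl⟩ := AddSubgroup.mem_zmultiples_iff.1 hg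
    ext b
    have key : ∀ u : ℝ, ⌊(u - (m * w + b)) / w⌋ = ⌊(u - b) / w⌋ - m := by
      intro u
      rw [← Int.floor_sub_intCast]
      congr 1
      field_simp
      ring
    simp [hS, AddSubgroup.vadd_def, key]
  have e2 := (isAddFundamentalDomain_Ioc hw 0 volume).measure_set_eq
    (isAddFundamentalDomain_Ioc hw (z - w) volume) hSm hper
  rw [e1, e2]
  have : S ∩ Set.Ioc (z - w) (z - w + w) = Set.Ioc (z - w) y := by
    ext b
    simp only [hS, Set.mem_setOf_eq, Set.mem_inter_iff, Set.mem_Ioc]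
    constructor
    · rintro ⟨h, h1, h2⟩
      have hz : ⌊(z - b) / w⌋ = 0 := by
        rw [Int.floor_eq_zero_iff]
        exact ⟨div_nonneg (by linarith) hw.le, by rw [div_lt_one hw]; linarith⟩
      rw [hz, Int.floor_eq_zero_iff] at h
      have := (le_div_iff₀ hw).1 h.1
      exact ⟨h1, by linarith⟩
    · rintro ⟨h1, h2⟩
      refine ⟨?_, h1, by linarith⟩
      have hz : ⌊(z - b) / w⌋ = 0 := by
        rw [Int.floor_eq_zero_iff]
        exact ⟨div_nonneg (by linarith) hw.le, by rw [div_lt_one hw]; linarith⟩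
      have hy : ⌊(y - b) / w⌋ = 0 := by
        rw [Int.floor_eq_zero_iff]
        exact ⟨div_nonneg (by linarith) hw.le, by rw [div_lt_one hw]; linarith⟩
      rw [hy, hz]
  rw [this, Real.volume_Ioc]
  congr 1; ring

lemma rb_vol (y z w : ℝ) (hw : 0 < w) :
    (ENNReal.ofReal w)⁻¹ *
      volume {b : ℝ | b ∈ Set.Ioo (0 : ℝ) w ∧ ⌊(y - b) / w⌋ = ⌊(z - b) / w⌋}
      = ENNReal.ofReal (max 0 (1 - |y - z| / w)) := by
  have h : volume {b : ℝ | b ∈ Set.Ioo (0 : ℝ) w ∧ ⌊(y - b) / w⌋ = ⌊(z - b) / w⌋}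
      = ENNReal.ofReal (w - |y - z|) := by
    rcases le_total y z with h | h
    · rw [rb_vol_le y z w hw h, abs_sub_comm, abs_of_nonneg (sub_nonneg.2 h)]
    · rw [abs_of_nonneg (sub_nonneg.2 h), ← rb_vol_le z y w hw h]
      simp only [eq_comm]
  rw [h, ← ENNReal.ofReal_inv_of_pos hw, ← ENNReal.ofReal_mul (inv_nonneg.2 hw.le)]
  have : w⁻¹ * (w - |y - z|) = 1 - |y - z| / w := by field_simp
  rw [this]
  rcases le_total 0 (1 - |y - z| / w) with h | h
  · rw [max_eq_right h]
  · rw [max_eq_left h, ENNReal.ofReal_of_nonpos h, ENNReal.ofReal_zero]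

/-- Theorem 4.2: for the random binning feature map built on a probability measure `μ`
with positive support (Polya kernel `k_μ`), each entry of a single random binning kernel
matrix is Bernoulli with success probability `K i j = k_μ (x i - x j)`, the sample
average of `D` i.i.d. copies is unbiased, and its expected squared Frobenius-norm error
is `(1/D)(Σ_{ij} K_{ij} - Σ_{ij} K_{ij}²)`. -/
theorem random_binning_unbiased_and_error
    (μ : Measure ℝ) [IsProbabilityMeasure μ] (hμ : μ (Set.Iic 0) = 0)
    (k : ℝ → ℝ)
    (hk : ∀ r : ℝ, k r = ∫ x in Set.Ioi (0 : ℝ), max 0 (1 - |r| / x) ∂μ)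
    (n : ℕ) (x : Fin n → ℝ)
    (K : Fin n → Fin n → ℝ) (hK : ∀ i j, K i j = k (x i - x j))
    (D : ℕ) (hD : 0 < D)
    {Ω : Type*} [MeasurableSpace Ω] (P : Measure Ω) [IsProbabilityMeasure P]
    (wb : Fin D → Ω → ℝ × ℝ)
    (hmeas : ∀ l, Measurable (wb l))
    (hindep : iIndepFun (m := fun _ : Fin D => (inferInstance : MeasurableSpace (ℝ × ℝ))) wb P)
    (hlaw : ∀ l, ∀ A : Set (ℝ × ℝ), MeasurableSet A →
      P.map (wb l) A
        = ∫⁻ w in Set.Ioi (0 : ℝ),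
            (ENNReal.ofReal w)⁻¹
              * volume {b : ℝ | b ∈ Set.Ioo (0 : ℝ) w ∧ (w, b) ∈ A} ∂μ) :
    (∀ l, ∀ i j,
      P {ω | ⌊(x i - (wb l ω).2) / (wb l ω).1⌋ = ⌊(x j - (wb l ω).2) / (wb l ω).1⌋}
        = ENNReal.ofReal (K i j)) ∧
    (∀ i j, (∫ ω, ((D : ℝ))⁻¹ *
        ∑ l : Fin D,
          (if ⌊(x i - (wb l ω).2) / (wb l ω).1⌋ = ⌊(x j - (wb l ω).2) / (wb l ω).1⌋
            then (1 : ℝ) else 0) ∂P)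
      = K i j) ∧
    (∫ ω, ∑ i : Fin n, ∑ j : Fin n,
        (((D : ℝ))⁻¹ *
          (∑ l : Fin D,
            (if ⌊(x i - (wb l ω).2) / (wb l ω).1⌋ = ⌊(x j - (wb l ω).2) / (wb l ω).1⌋
              then (1 : ℝ) else 0))
          - K i j) ^ 2 ∂P)
      = ((D : ℝ))⁻¹ * ((∑ i : Fin n, ∑ j : Fin n, K i j)
          - ∑ i : Fin n, ∑ j : Fin n, (K i j) ^ 2) := by
  have hK0 : ∀ i j, 0 ≤ K i j := by
    intro i j
    rw [hK, hk]
    exact integral_nonneg fun _ => le_max_left _ _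
  have h1 : ∀ l, ∀ i j,
      P {ω | ⌊(x i - (wb l ω).2) / (wb l ω).1⌋ = ⌊(x j - (wb l ω).2) / (wb l ω).1⌋}
        = ENNReal.ofReal (K i j) := by
    intro l i j
    have hA := rb_set_meas (x i) (x j)
    have h := hlaw l _ hA
    rw [Measure.map_apply (hmeas l) hA] at h
    refine Eq.trans h ?_
    rw [hK, hk, ofReal_integral_eq_lintegral_ofReal]
    · refine setLIntegral_congr_fun measurableSet_Ioi ?_
      intro w hw
      exact rb_vol (x i) (x j) w hw
    · refine Integrable.of_bound (C := 1) ?_ ?_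
      · exact (measurable_const.max
          (measurable_const.sub (measurable_const.div measurable_id))).aestronglyMeasurable
      · refine (ae_restrict_iff' measurableSet_Ioi).2 (Filter.Eventually.of_forall ?_)
        intro w hw
        have : 0 ≤ |x i - x j| / w := div_nonneg (abs_nonneg _) (le_of_lt hw)
        rw [Real.norm_eq_abs, abs_of_nonneg (le_max_left _ _)]
        exact max_le zero_le_one (by linarith)
    · exact Filter.Eventually.of_forall fun _ => le_max_left _ _
  have hD' : (D : ℝ) ≠ 0 := by positivity
  let g : Fin n → Fin n → ℝ × ℝ → ℝ := fun i j p =>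
    if ⌊(x i - p.2) / p.1⌋ = ⌊(x j - p.2) / p.1⌋ then (1 : ℝ) else 0
  have hg : ∀ i j, Measurable (g i j) := fun i j =>
    Measurable.ite (rb_set_meas (x i) (x j)) measurable_const measurable_const
  have hgm : ∀ i j l, Measurable (fun ω => g i j (wb l ω)) := fun i j l =>
    (hg i j).comp (hmeas l)
  have hL : ∀ i j l, MemLp (fun ω => g i j (wb l ω)) 2 P := by
    intro i j l
    refine MemLp.of_bound (hgm i j l).aestronglyMeasurable 1 (Filter.Eventually.of_forall ?_)
    intro ω
    simp only [g]
    split_ifs <;> simp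
  have hI : ∀ i j l, Integrable (fun ω => g i j (wb l ω)) P := fun i j l =>
    (hL i j l).integrable (by norm_num)
  have hE : ∀ i j l, ∫ ω, g i j (wb l ω) ∂P = K i j := by
    intro i j l
    have hm : MeasurableSet {ω | ⌊(x i - (wb l ω).2) / (wb l ω).1⌋
        = ⌊(x j - (wb l ω).2) / (wb l ω).1⌋} := hmeas l (rb_set_meas (x i) (x j))
    have : (fun ω => g i j (wb l ω)) = Set.indicator {ω | ⌊(x i - (wb l ω).2) / (wb l ω).1⌋
        = ⌊(x j - (wb l ω).2) / (wb l ω).1⌋} 1 := by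
      funext ω
      simp [g, Set.indicator_apply]
    rw [this, integral_indicator_one hm, Measure.real, h1, ENNReal.toReal_ofReal (hK0 i j)]
  have h2 : ∀ i j, ∫ ω, (D : ℝ)⁻¹ * ∑ l : Fin D, g i j (wb l ω) ∂P = K i j := by
    intro i j
    rw [integral_const_mul, integral_finsetSum _ (fun l _ => hI i j l)]
    simp only [hE, Finset.sum_const, Finset.card_univ, Fintype.card_fin, nsmul_eq_mul]
    field_simp
  have hLS : ∀ i j, MemLp (fun ω => (D : ℝ)⁻¹ * ∑ l : Fin D, g i j (wb l ω)) 2 P := by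
    intro i j
    exact (memLp_finsetSum _ (fun l _ => hL i j l)).const_mul _
  have h3 : ∀ i j, ∫ ω, ((D : ℝ)⁻¹ * (∑ l : Fin D, g i j (wb l ω)) - K i j) ^ 2 ∂P
      = (D : ℝ)⁻¹ * (K i j - K i j ^ 2) := by
    intro i j
    have hv := variance_eq_integral (hLS i j).aestronglyMeasurable.aemeasurable
    rw [h2] at hv
    rw [← hv, variance_const_mul]
    have hs : (fun ω => ∑ l : Fin D, g i j (wb l ω)) = ∑ l : Fin D, fun ω => g i j (wb l ω) := by
      funext ω; simp
    have hsq : ∀ l, Var[fun ω => g i j (wb l ω); P] = K i j - K i j ^ 2 := by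
      intro l
      rw [variance_eq_sub (hL i j l), hE]
      have : (fun ω => g i j (wb l ω)) ^ 2 = fun ω => g i j (wb l ω) := by
        funext ω
        simp only [g, Pi.pow_apply]
        split_ifs <;> simp
      rw [this, hE]
    rw [hs, IndepFun.variance_sum (fun l _ => hL i j l)]
    · simp only [hsq, Finset.sum_const, Finset.card_univ, Fintype.card_fin, nsmul_eq_mul]
      field_simp
    · intro a _ b _ hab
      exact (hindep.indepFun hab).comp (hg i j) (hg i j)
  refine ⟨h1, h2, ?_⟩
  have hint : ∀ i j, Integrable
      (fun ω => ((D : ℝ)⁻¹ * (∑ l : Fin D, g i j (wb l ω)) - K i j) ^ 2) P := fun i j =>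
    ((hLS i j).sub (memLp_const (K i j))).integrable_sq
  change ∫ ω, ∑ i : Fin n, ∑ j : Fin n,
    ((D : ℝ)⁻¹ * (∑ l : Fin D, g i j (wb l ω)) - K i j) ^ 2 ∂P = _
  rw [integral_finsetSum _ (fun i _ => integrable_finsetSum _ (fun j _ => hint i j))]
  simp only [integral_finsetSum _ (fun j _ => hint _ j), h3, ← Finset.mul_sum,
    Finset.sum_sub_distrib]
end
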